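/- For any two topological embeddings f, f' of the unit circle S¹ into the unit sphere S² (i.e., continuous injective maps f, f' : S¹ → S²), there exists a homeomorphism φ : S² → S² such that φ ∘ f = f'. In particular, φ maps the simple closed curve f(S¹) onto f'(S¹) and sends each marked point f(z) to f'(z). -/

import Mathlib

noncomputable section

abbrev E2 := EuclideanSpace ℝ (Fin 2)
abbrev E3 := EuclideanSpace ℝ (Fin 3)

def sphere1 : Set E2 := Metric.sphere 0 1
def sphere2 : Set E3 := Metric.sphere 0 1

/-!
Let `γ` be a simple closed curve in the plane, parametrised by the circle, and let `D` be the
bounded component of its complement. The inverse of `γ` maps the frontier of `D` onto the unit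
circle, and its harmonic extension `k` to `D` is a homeomorphism from the closure of `D` onto the
closed unit disc (Radó–Kneser–Choquet). Indeed, each real component `u` of `k` has boundary values
`cos (t - τ)` at `γ t`, for some direction `τ`; the boundary points where these exceed a given level
form an arc, so by the maximum principle the superlevel and sublevel sets of `u` are connected. At a
critical point of `u` two pieces of a superlevel set and two pieces of a sublevel set would be
interlaced, which is impossible. Hence `k` is a local homeomorphism, and proper as a map onto the
open disc, so a homeomorphism because the disc is simply connected.

Thus both sides of a simple closed curve in the sphere are discs, by homeomorphisms with prescribed
boundary values. For two embedded circles, match the discs of one with those of the other; the two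
homeomorphisms agree on the curve and glue.

The harmonic extension comes from Perron's method: every boundary point lies on an arc of `γ`, and
the logarithmic potential of a measure on that arc yields a barrier. The Jordan curve theorem is
obtained by counting winding numbers with continuous logarithms.
-/

namespace Schoenflies

open Set Filter Topology Metric MeasureTheory Real InnerProductSpace

/-! ### Subharmonic functions and the Poisson integral -/

/-- Continuous subharmonic functions on a plane set `D`, encoded by the mean value inequality on all
sufficiently small circles centred in `D`. -/
structure SubharmonicOn (v : ℂ → ℝ) (D : Set ℂ) : Prop where
  continuousOn : ContinuousOn v D
  le_circleAverage : ∀ z ∈ D, ∀ᶠ r in 𝓝[>] (0 : ℝ), v z ≤ circleAverage v z r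

section Subharmonic

variable {u v : ℂ → ℝ} {D : Set ℂ} {m : ℝ}

lemma eventually_closedBall_subset_of_isOpen (hD : IsOpen D) {z : ℂ} (hz : z ∈ D) :
    ∀ᶠ r in 𝓝[>] (0 : ℝ), 0 < r ∧ closedBall z r ⊆ D := by
  filter_upwards [self_mem_nhdsWithin,
    nhdsWithin_le_nhds (eventually_closedBall_subset (hD.mem_nhds hz))] with r hr hsub
  exact ⟨hr, hsub⟩

lemma circleIntegrable_of_closedBall_subset (hv : ContinuousOn v D) {z : ℂ} {r : ℝ} (hr : 0 < r)
    (h : closedBall z r ⊆ D) : CircleIntegrable v z r :=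
  (hv.mono (sphere_subset_closedBall.trans h)).circleIntegrable hr.le

lemma circleAverage_eq_of_harmonicOnNhd (hu : HarmonicOnNhd u D) {z : ℂ} {r : ℝ} (hr : 0 < r)
    (h : closedBall z r ⊆ D) : circleAverage u z r = u z :=
  InnerProductSpace.HarmonicOnNhd.circleAverage_eq (hu.mono (by rwa [abs_of_pos hr]))

lemma SubharmonicOn.of_harmonicOnNhd (hD : IsOpen D) (hu : HarmonicOnNhd u D) :
    SubharmonicOn u D where
  continuousOn := hu.continuousOn
  le_circleAverage z hz := by
    filter_upwards [eventually_closedBall_subset_of_isOpen hD hz] with r ⟨hr, hsub⟩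
    exact (circleAverage_eq_of_harmonicOnNhd hu hr hsub).ge

lemma SubharmonicOn.mono {E : Set ℂ} (hv : SubharmonicOn v D) (hE : E ⊆ D) : SubharmonicOn v E :=
  ⟨hv.continuousOn.mono hE, fun z hz => hv.le_circleAverage z (hE hz)⟩

lemma SubharmonicOn.add (hD : IsOpen D) (hu : SubharmonicOn u D) (hv : SubharmonicOn v D) :
    SubharmonicOn (u + v) D where
  continuousOn := hu.continuousOn.add hv.continuousOn
  le_circleAverage z hz := by
    filter_upwards [hu.le_circleAverage z hz, hv.le_circleAverage z hz,
      eventually_closedBall_subset_of_isOpen hD hz] with r hur hvr ⟨hr, hsub⟩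
    rw [circleAverage_add (circleIntegrable_of_closedBall_subset hu.continuousOn hr hsub)
      (circleIntegrable_of_closedBall_subset hv.continuousOn hr hsub)]
    exact add_le_add hur hvr

lemma SubharmonicOn.sub_harmonicOnNhd (hD : IsOpen D) (hv : SubharmonicOn v D)
    (hu : HarmonicOnNhd u D) : SubharmonicOn (v - u) D := by
  simpa only [sub_eq_add_neg] using hv.add hD (.of_harmonicOnNhd hD hu.neg)

lemma SubharmonicOn.sup (hD : IsOpen D) (hu : SubharmonicOn u D) (hv : SubharmonicOn v D) :
    SubharmonicOn (u ⊔ v) D where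
  continuousOn := hu.continuousOn.sup hv.continuousOn
  le_circleAverage z hz := by
    filter_upwards [hu.le_circleAverage z hz, hv.le_circleAverage z hz,
      eventually_closedBall_subset_of_isOpen hD hz] with r hur hvr ⟨hr, hsub⟩
    have hi := circleIntegrable_of_closedBall_subset
      (hu.continuousOn.sup hv.continuousOn) hr hsub
    refine max_le (hur.trans ?_) (hvr.trans ?_)
    · exact circleAverage_mono (circleIntegrable_of_closedBall_subset hu.continuousOn hr hsub) hi
        fun x _ => le_sup_left (a := u x)
    · exact circleAverage_mono (circleIntegrable_of_closedBall_subset hv.continuousOn hr hsub) hi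
        fun x _ => le_sup_right (a := u x)

lemma eq_of_le_circleAverage {z : ℂ} {r : ℝ} (hr : 0 < r) (hv : ContinuousOn v (sphere z r))
    (hle : ∀ x ∈ sphere z r, v x ≤ m) (h : m ≤ circleAverage v z r) : v (z + r) = m := by
  have hzr : z + r ∈ sphere z r := by simp [abs_of_pos hr]
  by_contra hne
  have hlt : v (circleMap z r 0) < m := by
    simpa [circleMap] using lt_of_le_of_ne (hle _ hzr) hne
  have hcm : Continuous fun θ => v (circleMap z r θ) :=
    hv.comp_continuous (continuous_circleMap z r) fun θ => circleMap_mem_sphere z hr.le θ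
  have hint : ∫ θ in (0 : ℝ)..2 * π, v (circleMap z r θ) < ∫ _ in (0 : ℝ)..2 * π, m :=
    intervalIntegral.integral_lt_integral_of_continuousOn_of_le_of_exists_lt two_pi_pos
      hcm.continuousOn continuousOn_const
      (fun θ _ => hle _ (circleMap_mem_sphere z hr.le θ)) ⟨0, ⟨le_rfl, two_pi_pos.le⟩, hlt⟩
  have havg : circleAverage v z r < circleAverage (fun _ => m) z r :=
    mul_lt_mul_of_pos_left hint (by positivity)
  rw [circleAverage_const] at havg
  exact h.not_gt havg

lemma isCompact_superlevel_of_frontier (hD : IsOpen D) (hb : Bornology.IsBounded D)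
    (hv : ContinuousOn v D)
    (hfr : ∀ x ∈ frontier D, ∀ ε > 0, ∀ᶠ z in 𝓝[D] x, v z ≤ m + ε) {a : ℝ} (ha : m < a) :
    IsCompact {z ∈ D | a ≤ v z} := by
  refine isCompact_of_isClosed_isBounded ?_ (hb.subset (sep_subset D _))
  rw [← isOpen_compl_iff, isOpen_iff_mem_nhds]
  intro x hx
  by_cases hxD : x ∈ D
  · have hxa : v x < a := lt_of_not_ge fun h => hx ⟨hxD, h⟩
    filter_upwards [(hv.continuousAt (hD.mem_nhds hxD)).eventually_lt continuousAt_const hxa]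
      with y hy hmem
    exact hy.not_ge hmem.2
  by_cases hxc : x ∈ closure D
  · have hev := hfr x ⟨hxc, by rwa [hD.interior_eq]⟩ ((a - m) / 2) (by linarith)
    filter_upwards [eventually_nhdsWithin_iff.1 hev] with y hy hmem
    linarith [hy hmem.1, hmem.2]
  · filter_upwards [isClosed_closure.isOpen_compl.mem_nhds hxc] with y hy hmem
    exact hy (subset_closure hmem.1)

theorem SubharmonicOn.le_of_eventually_le_frontier (hD : IsOpen D) (hb : Bornology.IsBounded D)
    (hv : SubharmonicOn v D)
    (hfr : ∀ x ∈ frontier D, ∀ ε > 0, ∀ᶠ z in 𝓝[D] x, v z ≤ m + ε) : ∀ z ∈ D, v z ≤ m := by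
  intro z₁ hz₁
  by_contra! hlt
  have hcomp {a : ℝ} (ha : m < a) := isCompact_superlevel_of_frontier hD hb hv.continuousOn hfr ha
  obtain ⟨x, ⟨hxD, hz₁x⟩, hxmax⟩ := (hcomp hlt).exists_isMaxOn ⟨z₁, hz₁, le_rfl⟩
    (hv.continuousOn.mono (sep_subset D _))
  have hmax : ∀ y ∈ D, v y ≤ v x := fun y hy =>
    (le_total (v z₁) (v y)).elim (fun h => hxmax ⟨hy, h⟩) fun h => h.trans hz₁x
  -- A rightmost maximum point is impossible: `v` would be maximal on a small circle around it.
  obtain ⟨y, ⟨hyD, hxy⟩, hymax⟩ := (hcomp (hlt.trans_le hz₁x)).exists_isMaxOn ⟨x, hxD, le_rfl⟩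
    Complex.continuous_re.continuousOn
  obtain ⟨r, hyr, hr, hsub⟩ := ((hv.le_circleAverage y hyD).and
    (eventually_closedBall_subset_of_isOpen hD hyD)).exists
  have hsphere : sphere y r ⊆ D := sphere_subset_closedBall.trans hsub
  have hright : v (y + r) = v x := eq_of_le_circleAverage hr (hv.continuousOn.mono hsphere)
    (fun z hz => hmax z (hsphere hz)) (hxy.trans hyr)
  have hre := hymax (a := y + r) ⟨hsphere (by simp [abs_of_pos hr]), hright.ge⟩
  simp only [mem_ofPred_eq, Complex.add_re, Complex.ofReal_re] at hre
  linarith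

theorem SubharmonicOn.le_of_le_frontier (hD : IsOpen D) (hb : Bornology.IsBounded D)
    (hv : SubharmonicOn v D) (hc : ContinuousOn v (closure D)) (hfr : ∀ x ∈ frontier D, v x ≤ m) :
    ∀ z ∈ closure D, v z ≤ m := by
  intro z hz
  by_cases hzD : z ∈ D
  · refine hv.le_of_eventually_le_frontier hD hb (fun x hx ε hε => ?_) z hzD
    have hlim : Tendsto v (𝓝[D] x) (𝓝 (v x)) :=
      (hc x (frontier_subset_closure hx)).mono_left (nhdsWithin_mono _ subset_closure)
    exact (hlim.eventually_lt_const (by linarith [hfr x hx])).mono fun _ h => h.le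
  · exact hfr z ⟨hz, by rwa [hD.interior_eq]⟩

end Subharmonic

/-- The Poisson integral on `ball c R` of a function `s` on the circle `sphere c R`. -/
def poissonIntegral (s : ℂ → ℝ) (c : ℂ) (R : ℝ) (w : ℂ) : ℝ :=
  circleAverage (poissonKernel c w • s) c R

section Poisson

variable {s t : ℂ → ℝ} {c w : ℂ} {R : ℝ}

lemma continuousOn_poissonKernel (hw : w ∈ ball c R) :
    ContinuousOn (poissonKernel c w) (sphere c |R|) := by
  rw [poissonKernel_eq_re_herglotzRieszKernel]
  exact Complex.continuous_re.comp_continuousOn (continuousOn_herglotzRieszKernel_sphere hw)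

lemma poissonKernel_nonneg {z : ℂ} (hw : w ∈ ball c R) (hz : z ∈ sphere c R) :
    0 ≤ poissonKernel c w z := by
  have hwR : ‖w - c‖ < R := mem_ball_iff_norm.1 hw
  rw [poissonKernel_eq_re_herglotzRieszKernel]
  exact (div_nonneg (by linarith) (by linarith [norm_nonneg (w - c)])).trans
    (le_re_herglotzRieszKernel hz hw)

lemma circleIntegrable_poissonKernel_smul (hw : w ∈ ball c R) (hs : CircleIntegrable s c R) :
    CircleIntegrable (poissonKernel c w • s) c R := by
  have hK : Continuous fun θ => poissonKernel c w (circleMap c R θ) :=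
    (continuousOn_poissonKernel hw).comp_continuous (continuous_circleMap c R)
      fun θ => circleMap_mem_sphere' c R θ
  exact IntervalIntegrable.continuousOn_mul hs hK.continuousOn

lemma poissonIntegral_mono (hw : w ∈ ball c R) (hs : CircleIntegrable s c R)
    (ht : CircleIntegrable t c R) (h : ∀ x ∈ sphere c R, s x ≤ t x) :
    poissonIntegral s c R w ≤ poissonIntegral t c R w := by
  refine circleAverage_mono (circleIntegrable_poissonKernel_smul hw hs)
    (circleIntegrable_poissonKernel_smul hw ht) ?_
  rw [abs_of_pos (pos_of_mem_ball hw)]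
  exact fun x hx => mul_le_mul_of_nonneg_left (h x hx) (poissonKernel_nonneg hw hx)

lemma harmonicOnNhd_poissonIntegral (hs : CircleIntegrable s c R) :
    HarmonicOnNhd (poissonIntegral s c R) (ball c R) := by
  set s₀ : ℂ → ℝ := fun z => s (z + c) with hs₀
  have hs₀i : CircleIntegrable s₀ 0 R := by
    refine IntervalIntegrable.congr (fun θ _ => ?_) hs
    simp [hs₀, circleMap, add_comm]
  have hs₀c : CircleIntegrable (fun ζ => (s₀ ζ : ℂ)) 0 R := ⟨hs₀i.1.ofReal, hs₀i.2.ofReal⟩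
  have hH := analyticOnNhd_circleAverage_herglotzRieszKernel_smul hs₀c
  have hre : ∀ w ∈ ball c R, poissonIntegral s c R w = (circleAverage
      (fun ζ => herglotzRieszKernel 0 (w - c) ζ • (s₀ ζ : ℂ)) 0 R).re := by
    intro w hw
    rw [re_circleAverage_herglotzRieszKernel_smul hs₀i (by simpa [dist_eq_norm] using hw),
      poissonIntegral, ← circleAverage_map_add_const]
    congr 1
    ext ζ
    simp only [hs₀, Pi.smul_apply', smul_eq_mul, poissonKernel_eq_re_herglotzRieszKernel,
      Function.comp_apply, herglotzRieszKernel_add_const]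
  intro w hw
  have hwc : w - c ∈ ball (0 : ℂ) R := by simpa [dist_eq_norm] using hw
  have han := (hH (w - c) hwc).fun_comp (f := fun w => w - c) (analyticAt_id.sub analyticAt_const)
  refine (harmonicAt_congr_nhds ?_).2 han.harmonicAt_re
  filter_upwards [isOpen_ball.mem_nhds hw] with x hx using hre x hx

lemma poissonIntegral_of_harmonicOnNhd (hw : w ∈ ball c R) (hs : HarmonicOnNhd s univ) :
    poissonIntegral s c R w = s w :=
  (HarmonicOnNhd.harmonicContOnCl (hs.mono (subset_univ _))).circleAverage_poissonKernel_smul hw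

lemma exists_harmonicOnNhd_eq_sq_norm_sub {z₀ : ℂ} (hz₀ : z₀ ∈ sphere c R) :
    ∃ q : ℂ → ℝ, HarmonicOnNhd q univ ∧ ∀ x ∈ sphere c R, q x = ‖x - z₀‖ ^ 2 := by
  refine ⟨fun x => ((2 * R ^ 2 : ℝ) - 2 * (x - c) * (starRingEnd ℂ) (z₀ - c) : ℂ).re,
    fun x _ => AnalyticAt.harmonicAt_re (by fun_prop), fun x hx => ?_⟩
  rw [mem_sphere_iff_norm] at hx hz₀
  beta_reduce
  rw [← sub_sub_sub_cancel_right x z₀ c, ← Complex.normSq_eq_norm_sq, Complex.normSq_sub,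
    Complex.normSq_eq_norm_sq, Complex.normSq_eq_norm_sq, hx, hz₀, mul_assoc, Complex.sub_re,
    Complex.ofReal_re, ← Complex.ofReal_ofNat, Complex.re_ofReal_mul]
  ring

lemma exists_le_add_mul_sq_norm_sub (hs : ContinuousOn s (sphere c R)) {z₀ : ℂ}
    (hz₀ : z₀ ∈ sphere c R) {ε : ℝ} (hε : 0 < ε) :
    ∃ C, ∀ x ∈ sphere c R, s x ≤ s z₀ + ε + C * ‖x - z₀‖ ^ 2 := by
  obtain ⟨M, hM⟩ := (isCompact_sphere c R).exists_bound_of_continuousOn hs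
  have hM₀ : 0 ≤ M := (norm_nonneg _).trans (hM z₀ hz₀)
  obtain ⟨δ, hδ, hd⟩ := Metric.continuousOn_iff.1 hs z₀ hz₀ ε hε
  refine ⟨2 * M / δ ^ 2, fun x hx => ?_⟩
  rcases lt_or_ge (dist x z₀) δ with h | h
  · have hclose := (abs_lt.1 (hd x hx h)).2
    have : 0 ≤ 2 * M / δ ^ 2 * ‖x - z₀‖ ^ 2 := by positivity
    linarith
  · have hfar : 2 * M / δ ^ 2 * δ ^ 2 ≤ 2 * M / δ ^ 2 * ‖x - z₀‖ ^ 2 := by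
      rw [dist_eq_norm] at h
      gcongr
    rw [div_mul_cancel₀ _ (by positivity)] at hfar
    linarith [le_of_abs_le (hM x hx), neg_le_of_abs_le (hM z₀ hz₀)]

lemma eventually_poissonIntegral_lt (hR : 0 < R) (hs : ContinuousOn s (sphere c R)) {z₀ : ℂ}
    (hz₀ : z₀ ∈ sphere c R) {ε : ℝ} (hε : 0 < ε) :
    ∀ᶠ w in 𝓝[ball c R] z₀, poissonIntegral s c R w < s z₀ + ε := by
  obtain ⟨C, hC⟩ := exists_le_add_mul_sq_norm_sub hs hz₀ (half_pos hε)
  obtain ⟨q, hq, hq_sphere⟩ := exists_harmonicOnNhd_eq_sq_norm_sub hz₀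
  set g : ℂ → ℝ := (fun _ => s z₀ + ε / 2) + C • q with hg
  have hgh : HarmonicOnNhd g univ := (harmonicOnNhd_const _).add hq.const_smul
  have hgc : Continuous g := continuousOn_univ.1 hgh.continuousOn
  have hgz₀ : g z₀ < s z₀ + ε := by
    simp only [hg, Pi.add_apply, Pi.smul_apply, hq_sphere z₀ hz₀, sub_self, norm_zero, smul_eq_mul]
    linarith
  filter_upwards [nhdsWithin_le_nhds (hgc.continuousAt.eventually_lt continuousAt_const hgz₀),
    self_mem_nhdsWithin] with w hgw hw
  calc poissonIntegral s c R w ≤ poissonIntegral g c R w :=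
        poissonIntegral_mono hw (hs.circleIntegrable hR.le)
          (hgc.continuousOn.circleIntegrable hR.le)
          fun x hx => by simpa [hg, hq_sphere x hx] using hC x hx
    _ = g w := poissonIntegral_of_harmonicOnNhd hw hgh
    _ < s z₀ + ε := hgw

lemma poissonIntegral_neg : poissonIntegral (-s) c R = -poissonIntegral s c R := by
  ext w
  simp [poissonIntegral, circleAverage]

lemma tendsto_poissonIntegral (hR : 0 < R) (hs : ContinuousOn s (sphere c R)) {z₀ : ℂ}
    (hz₀ : z₀ ∈ sphere c R) :
    Tendsto (poissonIntegral s c R) (𝓝[ball c R] z₀) (𝓝 (s z₀)) := by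
  rw [Metric.tendsto_nhds]
  intro ε hε
  filter_upwards [eventually_poissonIntegral_lt hR hs hz₀ hε,
    eventually_poissonIntegral_lt hR hs.neg hz₀ hε] with w hup hlo
  rw [poissonIntegral_neg, Pi.neg_apply, Pi.neg_apply] at hlo
  exact abs_lt.2 ⟨by linarith, by linarith⟩

end Poisson

open Classical in
/-- The Poisson modification of `s`: the Poisson integral of `s` inside `ball c R`, and `s` itself
outside. -/
def poissonModification (s : ℂ → ℝ) (c : ℂ) (R : ℝ) : ℂ → ℝ :=
  (ball c R).piecewise (poissonIntegral s c R) s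

section PoissonModification

variable {s : ℂ → ℝ} {c w : ℂ} {R : ℝ} {D : Set ℂ}

lemma poissonModification_of_mem (hw : w ∈ ball c R) :
    poissonModification s c R w = poissonIntegral s c R w :=
  if_pos hw

lemma poissonModification_of_notMem (hw : w ∉ ball c R) : poissonModification s c R w = s w :=
  if_neg hw

lemma harmonicOnNhd_poissonModification (hs : CircleIntegrable s c R) :
    HarmonicOnNhd (poissonModification s c R) (ball c R) := by
  intro w hw
  refine (harmonicAt_congr_nhds ?_).2 (harmonicOnNhd_poissonIntegral hs w hw)
  filter_upwards [isOpen_ball.mem_nhds hw] with x hx using poissonModification_of_mem hx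

lemma continuousOn_poissonModification (hR : 0 < R) (hD : closedBall c R ⊆ D)
    (hs : ContinuousOn s D) : ContinuousOn (poissonModification s c R) D := by
  classical
  have hsphere : ContinuousOn s (sphere c R) := hs.mono (sphere_subset_closedBall.trans hD)
  refine ContinuousOn.piecewise' (fun x ⟨_, hx⟩ => ?_) (fun x ⟨hxD, hx⟩ => ?_) ?_
    (hs.mono inter_subset_left)
  · rw [frontier_ball _ hR.ne'] at hx
    change Tendsto _ _ (𝓝 (poissonModification s c R x))
    rw [poissonModification_of_notMem fun h => (mem_ball.1 h).ne hx]
    exact (tendsto_poissonIntegral hR hsphere hx).mono_left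
      (nhdsWithin_mono _ inter_subset_right)
  · rw [frontier_ball _ hR.ne'] at hx
    change Tendsto _ _ (𝓝 (poissonModification s c R x))
    rw [poissonModification_of_notMem fun h => (mem_ball.1 h).ne hx]
    exact (hs x hxD).mono_left (nhdsWithin_mono _ inter_subset_left)
  · exact (harmonicOnNhd_poissonIntegral (hsphere.circleIntegrable hR.le)).continuousOn.mono
      inter_subset_right

lemma SubharmonicOn.le_poissonModification (hR : 0 < R) (hD : closedBall c R ⊆ D)
    (hs : SubharmonicOn s D) (w : ℂ) : s w ≤ poissonModification s c R w := by
  by_cases hw : w ∈ ball c R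
  · have hsc := hs.continuousOn.mono hD
    have hPh := harmonicOnNhd_poissonModification
      (circleIntegrable_of_closedBall_subset hs.continuousOn hR hD)
    have hle := ((hs.mono (ball_subset_closedBall.trans hD)).sub_harmonicOnNhd isOpen_ball
      hPh).le_of_le_frontier isOpen_ball isBounded_ball (m := 0)
      (by rw [closure_ball _ hR.ne']
          exact hsc.sub (continuousOn_poissonModification hR subset_rfl hsc))
      (fun x hx => by
        rw [frontier_ball _ hR.ne'] at hx
        rw [Pi.sub_apply, poissonModification_of_notMem fun h => (mem_ball.1 h).ne hx, sub_self])
      w (subset_closure hw)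
    exact sub_nonpos.1 hle
  · rw [poissonModification_of_notMem hw]

lemma SubharmonicOn.poissonModification (hD : IsOpen D) (hR : 0 < R) (hcR : closedBall c R ⊆ D)
    (hs : SubharmonicOn s D) : SubharmonicOn (poissonModification s c R) D where
  continuousOn := continuousOn_poissonModification hR hcR hs.continuousOn
  le_circleAverage z hz := by
    by_cases hzb : z ∈ ball c R
    · have hP := harmonicOnNhd_poissonModification
        (circleIntegrable_of_closedBall_subset hs.continuousOn hR hcR)
      exact (SubharmonicOn.of_harmonicOnNhd isOpen_ball hP).le_circleAverage z hzb
    · filter_upwards [hs.le_circleAverage z hz, eventually_closedBall_subset_of_isOpen hD hz]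
        with r hr ⟨hr₀, hsub⟩
      rw [poissonModification_of_notMem hzb]
      exact hr.trans (circleAverage_mono
        (circleIntegrable_of_closedBall_subset hs.continuousOn hr₀ hsub)
        (circleIntegrable_of_closedBall_subset
          (continuousOn_poissonModification hR hcR hs.continuousOn) hr₀ hsub)
        fun x _ => hs.le_poissonModification hR hcR x)

end PoissonModification

/-! ### The Dirichlet problem -/

section MonotoneLimits

variable {s : ℕ → ℂ → ℝ} {L : ℂ → ℝ} {c w : ℂ} {R M : ℝ}

lemma circleIntegrable_of_tendsto (hs : ∀ n, CircleIntegrable (s n) c R)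
    (hM : ∀ n, ∀ x ∈ sphere c |R|, |s n x| ≤ M)
    (hL : ∀ x ∈ sphere c |R|, Tendsto (s · x) atTop (𝓝 (L x))) : CircleIntegrable L c R := by
  refine (intervalIntegrable_const (c := M)).mono_fun' ?_ (.of_forall fun θ => ?_)
  · exact aestronglyMeasurable_of_tendsto_ae atTop
      (fun n => (intervalIntegrable_iff.1 (hs n)).aestronglyMeasurable)
      (.of_forall fun θ => hL _ (circleMap_mem_sphere' c R θ))
  · exact le_of_tendsto' (hL _ (circleMap_mem_sphere' c R θ)).abs
      fun n => hM n _ (circleMap_mem_sphere' c R θ)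

lemma tendsto_poissonIntegral_of_tendsto (hw : w ∈ ball c R)
    (hs : ∀ n, CircleIntegrable (s n) c R) (hM : ∀ n, ∀ x ∈ sphere c |R|, |s n x| ≤ M)
    (hL : ∀ x ∈ sphere c |R|, Tendsto (s · x) atTop (𝓝 (L x))) :
    Tendsto (fun n => poissonIntegral (s n) c R w) atTop (𝓝 (poissonIntegral L c R w)) := by
  have hK : Continuous fun θ => poissonKernel c w (circleMap c R θ) :=
    (continuousOn_poissonKernel hw).comp_continuous (continuous_circleMap c R)
      fun θ => circleMap_mem_sphere' c R θ
  refine Tendsto.const_smul (intervalIntegral.tendsto_integral_filter_of_dominated_convergence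
    (fun θ => |poissonKernel c w (circleMap c R θ)| * M) (.of_forall fun n => ?_)
    (.of_forall fun n => .of_forall fun θ _ => ?_) ?_ (.of_forall fun θ _ => ?_)) _
  · exact (intervalIntegrable_iff.1
      (circleIntegrable_poissonKernel_smul hw (hs n))).aestronglyMeasurable
  · simp only [Pi.smul_apply', smul_eq_mul, norm_mul, norm_eq_abs]
    exact mul_le_mul_of_nonneg_left (hM n _ (circleMap_mem_sphere' c R θ)) (abs_nonneg _)
  · exact (hK.abs.mul continuous_const).intervalIntegrable _ _
  · exact (hL _ (circleMap_mem_sphere' c R θ)).const_mul _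

end MonotoneLimits

/-- The Perron family of the Dirichlet problem on `D` with boundary values `φ`: the subharmonic
functions whose upper boundary limits are at most `φ`. -/
def perronFamily (D : Set ℂ) (φ : ℂ → ℝ) : Set (ℂ → ℝ) :=
  {s | SubharmonicOn s D ∧ ∀ x ∈ frontier D, ∀ ε > 0, ∀ᶠ z in 𝓝[D] x, s z ≤ φ x + ε}

/-- Perron's candidate for the solution of the Dirichlet problem: the upper envelope of the Perron
family. -/
def perronSolution (D : Set ℂ) (φ : ℂ → ℝ) (z : ℂ) : ℝ :=
  ⨆ s : perronFamily D φ, (s : ℂ → ℝ) z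

section Perron

variable {D : Set ℂ} {φ s t : ℂ → ℝ} {M : ℝ} {z : ℂ}

lemma le_of_mem_perronFamily (hD : IsOpen D) (hb : Bornology.IsBounded D)
    (hφ : ∀ x ∈ frontier D, φ x ≤ M) (hs : s ∈ perronFamily D φ) : ∀ z ∈ D, s z ≤ M :=
  hs.1.le_of_eventually_le_frontier hD hb fun x hx ε hε =>
    (hs.2 x hx ε hε).mono fun _ h => h.trans (by linarith [hφ x hx])

lemma const_mem_perronFamily (hD : IsOpen D) (hφ : ∀ x ∈ frontier D, M ≤ φ x) :
    (fun _ => M) ∈ perronFamily D φ :=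
  ⟨.of_harmonicOnNhd hD (harmonicOnNhd_const M), fun x hx ε hε =>
    .of_forall fun _ => by linarith [hφ x hx]⟩

lemma sup_mem_perronFamily (hD : IsOpen D) (hs : s ∈ perronFamily D φ)
    (ht : t ∈ perronFamily D φ) : s ⊔ t ∈ perronFamily D φ :=
  ⟨hs.1.sup hD ht.1, fun x hx ε hε => by
    filter_upwards [hs.2 x hx ε hε, ht.2 x hx ε hε] with z hsz htz using max_le hsz htz⟩

lemma poissonModification_mem_perronFamily (hD : IsOpen D) {c : ℂ} {R : ℝ} (hR : 0 < R)
    (hcR : closedBall c R ⊆ D) (hs : s ∈ perronFamily D φ) :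
    poissonModification s c R ∈ perronFamily D φ := by
  refine ⟨hs.1.poissonModification hD hR hcR, fun x hx ε hε => ?_⟩
  have hxB : x ∈ (closedBall c R)ᶜ := fun h => by
    rw [hD.frontier_eq] at hx
    exact hx.2 (hcR h)
  filter_upwards [hs.2 x hx ε hε,
    nhdsWithin_le_nhds (isClosed_closedBall.isOpen_compl.mem_nhds hxB)] with z hz hzB
  rwa [poissonModification_of_notMem fun h => hzB (ball_subset_closedBall h)]

lemma le_perronSolution (hD : IsOpen D) (hb : Bornology.IsBounded D)
    (hφ : ∀ x ∈ frontier D, φ x ≤ M) (hs : s ∈ perronFamily D φ) (hz : z ∈ D) :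
    s z ≤ perronSolution D φ z :=
  le_ciSup (f := fun s : perronFamily D φ => (s : ℂ → ℝ) z)
    ⟨M, forall_mem_range.2 fun s => le_of_mem_perronFamily hD hb hφ s.2 z hz⟩ ⟨s, hs⟩

lemma perronSolution_le {a : ℝ} (hne : (perronFamily D φ).Nonempty)
    (h : ∀ s ∈ perronFamily D φ, s z ≤ a) : perronSolution D φ z ≤ a :=
  have := hne.to_subtype
  ciSup_le fun s => h s s.2

lemma exists_monotone_tendsto_perronSolution (hD : IsOpen D) (hb : Bornology.IsBounded D)
    (hφ : ∀ x ∈ frontier D, φ x ≤ M) (hne : (perronFamily D φ).Nonempty) {q : ℕ → ℂ}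
    (hq : ∀ k, q k ∈ D) :
    ∃ S : ℕ → ℂ → ℝ, Monotone S ∧ (∀ n, S n ∈ perronFamily D φ) ∧
      ∀ k, Tendsto (S · (q k)) atTop (𝓝 (perronSolution D φ (q k))) := by
  have := hne.to_subtype
  have happrox (k j : ℕ) : ∃ s ∈ perronFamily D φ,
      perronSolution D φ (q k) - 1 / (j + 1) < s (q k) := by
    obtain ⟨s, hs⟩ := exists_lt_of_lt_ciSup
      (show perronSolution D φ (q k) - 1 / (j + 1 : ℝ) < perronSolution D φ (q k) from
        sub_lt_self _ Nat.one_div_pos_of_nat)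
    exact ⟨s, s.2, hs⟩
  choose a ha hlt using happrox
  set S := partialSups fun n : ℕ => a n.unpair.1 n.unpair.2
  have hmem (n : ℕ) : S n ∈ perronFamily D φ :=
    Finset.sup'_induction Finset.nonempty_Iic _ (fun _ hs _ ht => sup_mem_perronFamily hD hs ht)
      fun _ _ => ha _ _
  refine ⟨S, S.monotone, hmem, fun k => tendsto_order.2 ⟨fun x hx => ?_, fun x hx => ?_⟩⟩
  · obtain ⟨j, hj⟩ := exists_nat_one_div_lt (sub_pos.2 hx)
    filter_upwards [eventually_ge_atTop (Nat.pair k j)] with n hn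
    have hle : a k j (q k) ≤ S n (q k) := by
      have := le_partialSups_of_le (fun n : ℕ => a n.unpair.1 n.unpair.2) hn
      simp only [Nat.unpair_pair] at this
      exact this (q k)
    linarith [hlt k j]
  · exact .of_forall fun n => (le_perronSolution hD hb hφ (hmem n) (hq k)).trans_lt hx

lemma exists_poissonIntegral_limit (hD : IsOpen D) (hb : Bornology.IsBounded D)
    (hφ : ∀ x ∈ frontier D, φ x ≤ M) {c : ℂ} {R : ℝ} (hR : 0 < R) (hcR : closedBall c R ⊆ D)
    {S : ℕ → ℂ → ℝ} (hmono : Monotone S) (hS : ∀ n, S n ∈ perronFamily D φ) :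
    ∃ L, CircleIntegrable L c R ∧ ∀ w ∈ ball c R,
      Tendsto (fun n => poissonModification (S n) c R w) atTop (𝓝 (poissonIntegral L c R w)) := by
  have hsphere : sphere c |R| ⊆ D := by
    rw [abs_of_pos hR]
    exact sphere_subset_closedBall.trans hcR
  obtain ⟨m, hm⟩ := (isCompact_sphere c |R|).exists_bound_of_continuousOn
    ((hS 0).1.continuousOn.mono hsphere)
  have hup (n : ℕ) {x : ℂ} (hx : x ∈ sphere c |R|) : S n x ≤ M :=
    le_of_mem_perronFamily hD hb hφ (hS n) x (hsphere hx)
  have hbound (n : ℕ) : ∀ x ∈ sphere c |R|, |S n x| ≤ max m M := fun x hx =>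
    abs_le.2 ⟨(neg_le_neg (le_max_left m M)).trans
      ((neg_le_of_abs_le (hm x hx)).trans (hmono n.zero_le x)), (hup n hx).trans (le_max_right _ _)⟩
  have hlim : ∀ x ∈ sphere c |R|, Tendsto (S · x) atTop (𝓝 (⨆ n, S n x)) := fun x hx =>
    tendsto_atTop_ciSup (fun _ _ hnm => hmono hnm x) ⟨M, forall_mem_range.2 fun n => hup n hx⟩
  have hint (n : ℕ) : CircleIntegrable (S n) c R :=
    circleIntegrable_of_closedBall_subset (hS n).1.continuousOn hR hcR
  refine ⟨_, circleIntegrable_of_tendsto hint hbound hlim, fun w hw => ?_⟩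
  simpa only [poissonModification_of_mem hw] using
    tendsto_poissonIntegral_of_tendsto hw hint hbound hlim

theorem harmonicOnNhd_perronSolution (hD : IsOpen D) (hb : Bornology.IsBounded D)
    (hφ : ∀ x ∈ frontier D, φ x ≤ M) (hne : (perronFamily D φ).Nonempty) :
    HarmonicOnNhd (perronSolution D φ) D := by
  intro c hc
  obtain ⟨R, hR, hcR⟩ := (eventually_closedBall_subset_of_isOpen hD hc).exists
  have hBD : ball c R ⊆ D := ball_subset_closedBall.trans hcR
  have : Nonempty (ball c R) := ⟨c, mem_ball_self hR⟩
  set q : ℕ → ball c R := TopologicalSpace.denseSeq (ball c R)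
  obtain ⟨S, hmono, hS, hSq⟩ := exists_monotone_tendsto_perronSolution hD hb hφ hne
    (q := fun k => q k) fun k => hBD (q k).2
  obtain ⟨L, hL, hlim⟩ := exists_poissonIntegral_limit hD hb hφ hR hcR hmono hS
  have hPh := harmonicOnNhd_poissonIntegral hL
  have hq_le (k : ℕ) : perronSolution D φ (q k) ≤ poissonIntegral L c R (q k) :=
    le_of_tendsto_of_tendsto' (hSq k) (hlim _ (q k).2) fun n =>
      (hS n).1.le_poissonModification hR hcR _
  have hle : ∀ s ∈ perronFamily D φ, ∀ w : ball c R, s w ≤ poissonIntegral L c R w := fun s hs w =>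
    (TopologicalSpace.denseRange_denseSeq (ball c R)).induction_on w
      (isClosed_le (hs.1.continuousOn.mono hBD).domRestrict hPh.continuousOn.domRestrict)
      fun k => (le_perronSolution hD hb hφ hs (hBD (q k).2)).trans (hq_le k)
  have heq : EqOn (perronSolution D φ) (poissonIntegral L c R) (ball c R) := fun w hw =>
    le_antisymm (perronSolution_le hne fun s hs => hle s hs ⟨w, hw⟩)
      (le_of_tendsto' (hlim w hw) fun n => le_perronSolution hD hb hφ
        (poissonModification_mem_perronFamily hD hR hcR (hS n)) (hBD hw))
  exact (harmonicAt_congr_nhds (heq.eventuallyEq_of_mem (ball_mem_nhds c hR))).2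
    (hPh c (mem_ball_self hR))

end Perron

/-- Barriers at `x₀` relative to `D`: harmonic functions on `D` which are nonnegative, at least `1`
away from `x₀` and arbitrarily small near `x₀`. -/
def HasBarrier (D : Set ℂ) (x₀ : ℂ) : Prop :=
  ∀ r > 0, ∀ ε > 0, ∃ w : ℂ → ℝ, HarmonicOnNhd w D ∧ (∀ z ∈ D, 0 ≤ w z) ∧
    (∀ z ∈ D, r ≤ ‖z - x₀‖ → 1 ≤ w z) ∧ ∀ᶠ z in 𝓝[D] x₀, w z < ε

section Boundary

variable {D : Set ℂ} {φ : ℂ → ℝ} {x₀ : ℂ} {M ε : ℝ}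

lemma HasBarrier.exists_majorant (hB : HasBarrier D x₀)
    (hφc : ContinuousWithinAt φ (frontier D) x₀) (hM : ∀ x ∈ frontier D, |φ x| ≤ M)
    (hx₀ : x₀ ∈ frontier D) (hε : 0 < ε) :
    ∃ w : ℂ → ℝ, HarmonicOnNhd w D ∧ (∀ᶠ z in 𝓝[D] x₀, w z < ε) ∧
      ∀ x ∈ frontier D, ∀ᶠ z in 𝓝[D] x, |φ x - φ x₀| ≤ w z := by
  obtain ⟨ρ, hρ, hφρ⟩ := Metric.continuousWithinAt_iff.1 hφc (ε / 2) (half_pos hε)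
  have hM₀ : 0 ≤ M := (abs_nonneg _).trans (hM x₀ hx₀)
  obtain ⟨w, hw, hw₀, hw₁, hwε⟩ := hB (ρ / 2) (half_pos hρ) (ε / (4 * (M + 1))) (by positivity)
  refine ⟨(fun _ => ε / 2) + (2 * M) • w, (harmonicOnNhd_const _).add hw.const_smul, ?_, ?_⟩
  · filter_upwards [hwε, self_mem_nhdsWithin] with z hz hzD
    rw [lt_div_iff₀ (by positivity)] at hz
    simp only [Pi.add_apply, Pi.smul_apply, smul_eq_mul]
    linarith [hw₀ z hzD]
  · intro x hx
    rcases lt_or_ge (dist x x₀) ρ with hxρ | hxρ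
    · filter_upwards [self_mem_nhdsWithin] with z hz
      have := (hφρ hx hxρ).le
      rw [Real.dist_eq] at this
      simp only [Pi.add_apply, Pi.smul_apply, smul_eq_mul]
      linarith [mul_nonneg (mul_nonneg zero_le_two hM₀) (hw₀ z hz)]
    · filter_upwards [self_mem_nhdsWithin, nhdsWithin_le_nhds (ball_mem_nhds x (half_pos hρ))]
        with z hz hzx
      have hfar : ρ / 2 ≤ ‖z - x₀‖ := by
        rw [← dist_eq_norm]
        linarith [dist_triangle_left x x₀ z, mem_ball.1 hzx]
      have hone : 2 * M * 1 ≤ 2 * M * w z := by gcongr; exact hw₁ z hz hfar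
      have := abs_sub (φ x) (φ x₀)
      simp only [Pi.add_apply, Pi.smul_apply, smul_eq_mul]
      linarith [hM x hx, hM x₀ hx₀]

theorem tendsto_perronSolution (hD : IsOpen D) (hb : Bornology.IsBounded D)
    (hB : HasBarrier D x₀) (hφc : ContinuousWithinAt φ (frontier D) x₀)
    (hM : ∀ x ∈ frontier D, |φ x| ≤ M) (hx₀ : x₀ ∈ frontier D) :
    Tendsto (perronSolution D φ) (𝓝[D] x₀) (𝓝 (φ x₀)) := by
  rw [Metric.tendsto_nhds]
  intro ε hε
  obtain ⟨w, hw, hwε, hφw⟩ := hB.exists_majorant hφc hM hx₀ hε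
  have hφM : ∀ x ∈ frontier D, φ x ≤ M := fun x hx => le_of_abs_le (hM x hx)
  have hlower : (fun _ => φ x₀) - w ∈ perronFamily D φ := by
    refine ⟨.of_harmonicOnNhd hD ((harmonicOnNhd_const _).sub hw), fun x hx δ hδ => ?_⟩
    filter_upwards [hφw x hx] with z hz
    simp only [Pi.sub_apply]
    linarith [neg_le_of_abs_le hz]
  have hupper : ∀ s ∈ perronFamily D φ, ∀ z ∈ D, s z - w z ≤ φ x₀ := fun s hs =>
    (hs.1.sub_harmonicOnNhd hD hw).le_of_eventually_le_frontier hD hb fun x hx δ hδ => by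
      filter_upwards [hs.2 x hx δ hδ, hφw x hx] with z hsz hwz
      linarith [le_of_abs_le hwz]
  filter_upwards [hwε, self_mem_nhdsWithin] with z hwz hz
  have hge := le_perronSolution hD hb hφM hlower hz
  have hle : perronSolution D φ z ≤ φ x₀ + w z :=
    perronSolution_le ⟨_, hlower⟩ fun s hs => by linarith [hupper s hs z hz]
  simp only [Pi.sub_apply] at hge
  exact abs_lt.2 ⟨by linarith, by linarith⟩

open Classical in
theorem exists_harmonicOnNhd_eqOn_frontier (hD : IsOpen D) (hb : Bornology.IsBounded D)
    (hB : ∀ x ∈ frontier D, HasBarrier D x) (hφ : ContinuousOn φ (frontier D)) :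
    ∃ u : ℂ → ℝ, HarmonicOnNhd u D ∧ ContinuousOn u (closure D) ∧ EqOn u φ (frontier D) := by
  obtain ⟨M, hM⟩ := (isCompact_of_isClosed_isBounded isClosed_frontier
    (hb.closure.subset frontier_subset_closure)).exists_bound_of_continuousOn hφ
  have hne : (perronFamily D φ).Nonempty :=
    ⟨_, const_mem_perronFamily hD fun x hx => neg_le_of_abs_le (hM x hx)⟩
  have hharm := harmonicOnNhd_perronSolution hD hb (fun x hx => le_of_abs_le (hM x hx)) hne
  have hdisj {x : ℂ} (hx : x ∈ frontier D) : x ∉ D := by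
    rw [hD.frontier_eq] at hx
    exact hx.2
  refine ⟨D.piecewise (perronSolution D φ) φ, fun x hx => ?_, ?_,
    fun x hx => piecewise_eq_of_notMem _ _ _ (hdisj hx)⟩
  · refine (harmonicAt_congr_nhds ?_).2 (hharm x hx)
    filter_upwards [hD.mem_nhds hx] with y hy using piecewise_eq_of_mem _ _ _ hy
  · refine ContinuousOn.piecewise' (fun x ⟨_, hx⟩ => ?_) (fun x ⟨_, hx⟩ => ?_)
      (hharm.continuousOn.mono inter_subset_right) (hφ.mono fun x hx => ?_)
    · rw [piecewise_eq_of_notMem _ _ _ (hdisj hx)]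
      exact (tendsto_perronSolution hD hb (hB x hx) (hφ x hx) hM hx).mono_left
        (nhdsWithin_mono _ inter_subset_right)
    · rw [piecewise_eq_of_notMem _ _ _ (hdisj hx)]
      exact (hφ x hx).mono_left (nhdsWithin_mono _ fun y hy => by
        rw [hD.frontier_eq]; exact ⟨hy.1, hy.2⟩)
    · rw [hD.frontier_eq]; exact ⟨hx.1, hx.2⟩

end Boundary

/-! ### Barriers from logarithmic potentials -/

/-- The logarithmic potential of the image of Lebesgue measure on `[0, ρ]` under `ζ`. -/
def logPotential (ζ : ℝ → ℂ) (ρ : ℝ) (z : ℂ) : ℝ :=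
  ∫ t in (0 : ℝ)..ρ, log ‖z - ζ t‖

section LogPotential

variable {ζ : ℝ → ℂ} {ρ δ C : ℝ} {z : ℂ}

lemma abs_log_le_of_mem_Icc {a b x : ℝ} (ha : 0 < a) (hx : x ∈ Icc a b) :
    |log x| ≤ |log a| + |log b| := by
  have hax := log_le_log ha hx.1
  have hxb := log_le_log (ha.trans_le hx.1) hx.2
  exact abs_le.2 ⟨by linarith [neg_abs_le (log a), abs_nonneg (log b)],
    by linarith [le_abs_self (log b), abs_nonneg (log a)]⟩

lemma le_norm_sub_of_ball_subset {D : Set ℂ} {y : ℂ} (h : ball z δ ⊆ D) (hy : y ∉ D) :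
    δ ≤ ‖z - y‖ := by
  by_contra! hlt
  exact hy (h (by rwa [mem_ball_iff_norm, norm_sub_rev]))

lemma intervalIntegrable_log_norm_sub (hζ : Measurable ζ) (hC : ∀ t ∈ uIoc 0 ρ, ‖ζ t‖ ≤ C)
    (hδ : 0 < δ) (hz : ∀ t, δ ≤ ‖z - ζ t‖) :
    IntervalIntegrable (fun t => log ‖z - ζ t‖) volume 0 ρ := by
  refine (intervalIntegrable_const (c := |log δ| + |log (‖z‖ + C)|)).mono_fun'
    (measurable_log.comp (measurable_const.sub hζ).norm).aestronglyMeasurable ?_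
  filter_upwards [ae_restrict_mem measurableSet_uIoc] with t ht
  exact abs_log_le_of_mem_Icc hδ ⟨hz t, (norm_sub_le _ _).trans (by linarith [hC t ht])⟩

lemma differentiableOn_integral_log_one_add_div {a : ℝ → ℂ} (ha : Measurable a) (hδ : 0 < δ)
    (hδa : ∀ t, δ ≤ ‖a t‖) :
    DifferentiableOn ℂ (fun h => ∫ t in (0 : ℝ)..ρ, Complex.log (1 + h / a t))
      (ball 0 (δ / 2)) := by
  intro h₀ hh₀
  have hdiv {h : ℂ} (hh : h ∈ ball (0 : ℂ) (δ / 2)) (t : ℝ) : ‖h / a t‖ ≤ 1 / 2 := by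
    rw [norm_div, div_le_iff₀ (hδ.trans_le (hδa t))]
    linarith [mem_ball_zero_iff.1 hh, hδa t]
  have hslit {h : ℂ} (hh : h ∈ ball (0 : ℂ) (δ / 2)) (t : ℝ) : 1 + h / a t ∈ Complex.slitPlane :=
    Complex.mem_slitPlane_of_norm_lt_one ((hdiv hh t).trans_lt (by norm_num))
  have hder {h : ℂ} (hh : h ∈ ball (0 : ℂ) (δ / 2)) (t : ℝ) :
      HasDerivAt (fun h => Complex.log (1 + h / a t)) (1 / a t / (1 + h / a t)) h :=
    (((hasDerivAt_id h).div_const (a t)).const_add 1).clog (hslit hh t)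
  have hmeas (h : ℂ) : Measurable fun t => Complex.log (1 + h / a t) := by fun_prop
  refine (intervalIntegral.hasDerivAt_integral_of_dominated_loc_of_deriv_le
    (bound := fun _ => 2 / δ) (F' := fun h t => 1 / a t / (1 + h / a t))
    (isOpen_ball.mem_nhds hh₀) (.of_forall fun h => (hmeas h).aestronglyMeasurable) ?_
    (Measurable.aestronglyMeasurable (by fun_prop)) (.of_forall fun t _ h hh => ?_)
    intervalIntegrable_const
    (.of_forall fun t _ h hh => hder hh t)).2.differentiableAt.differentiableWithinAt
  · refine (intervalIntegrable_const (c := (3 / 2 * (1 / 2) : ℝ))).mono_fun'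
      (hmeas h₀).aestronglyMeasurable (.of_forall fun t => ?_)
    exact (Complex.norm_log_one_add_half_le_self (hdiv hh₀ t)).trans
      (mul_le_mul_of_nonneg_left (hdiv hh₀ t) (by norm_num))
  · have ha₀ : a t ≠ 0 := norm_pos_iff.1 (hδ.trans_le (hδa t))
    rw [div_div, mul_add, mul_one, mul_div_cancel₀ _ ha₀, norm_div, norm_one,
      ← inv_div δ 2, ← one_div]
    refine one_div_le_one_div_of_le (half_pos hδ) ?_
    have := norm_sub_le (a t + h) h
    rw [add_sub_cancel_right] at this
    linarith [mem_ball_zero_iff.1 hh, hδa t]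

lemma logPotential_add_eq (hζ : Measurable ζ) (hC : ∀ t ∈ uIoc 0 ρ, ‖ζ t‖ ≤ C)
    (hδ : 0 < δ) (hz : ∀ t, δ ≤ ‖z - ζ t‖) {h : ℂ} (hh : h ∈ ball 0 (δ / 2)) :
    logPotential ζ ρ (z + h) = logPotential ζ ρ z +
      (∫ t in (0 : ℝ)..ρ, Complex.log (1 + h / (z - ζ t))).re := by
  have hdiv (t : ℝ) : ‖h / (z - ζ t)‖ ≤ 1 / 2 := by
    rw [norm_div, div_le_iff₀ (hδ.trans_le (hz t))]
    linarith [mem_ball_zero_iff.1 hh, hz t]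
  have hint : IntervalIntegrable (fun t => Complex.log (1 + h / (z - ζ t))) volume 0 ρ :=
    (intervalIntegrable_const (c := (3 / 2 * (1 / 2) : ℝ))).mono_fun'
      (Measurable.aestronglyMeasurable (by fun_prop)) (.of_forall fun t =>
        (Complex.norm_log_one_add_half_le_self (hdiv t)).trans
          (mul_le_mul_of_nonneg_left (hdiv t) (by norm_num)))
  have hre := Complex.reCLM.intervalIntegral_comp_comm hint
  simp only [Complex.reCLM_apply, Complex.log_re] at hre
  have hintre : IntervalIntegrable (fun t => log ‖1 + h / (z - ζ t)‖) volume 0 ρ := by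
    simp only [← Complex.log_re]
    exact ⟨hint.1.re, hint.2.re⟩
  rw [← hre, logPotential, logPotential,
    ← intervalIntegral.integral_add (intervalIntegrable_log_norm_sub hζ hC hδ hz) hintre]
  refine intervalIntegral.integral_congr fun t _ => ?_
  have hne : z - ζ t ≠ 0 := norm_pos_iff.1 (hδ.trans_le (hz t))
  have hne' : 1 + h / (z - ζ t) ≠ 0 := Complex.slitPlane_ne_zero
    (Complex.mem_slitPlane_of_norm_lt_one ((hdiv t).trans_lt (by norm_num)))
  rw [← log_mul (norm_ne_zero_iff.2 hne) (norm_ne_zero_iff.2 hne'), ← norm_mul, mul_add,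
    mul_div_cancel₀ _ hne]
  ring_nf

theorem harmonicOnNhd_logPotential {D : Set ℂ} (hD : IsOpen D) (hζ : Measurable ζ)
    (hC : ∀ t ∈ uIoc 0 ρ, ‖ζ t‖ ≤ C) (hζD : ∀ t, ζ t ∉ D) :
    HarmonicOnNhd (logPotential ζ ρ) D := by
  intro z hz
  obtain ⟨δ, hδ, hsub⟩ := Metric.isOpen_iff.1 hD z hz
  have hdist (t : ℝ) : δ ≤ ‖z - ζ t‖ := le_norm_sub_of_ball_subset hsub (hζD t)
  have hG := (differentiableOn_integral_log_one_add_div (ρ := ρ) (measurable_const.sub hζ) hδ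
    hdist).analyticAt (ball_mem_nhds 0 (half_pos hδ))
  rw [← sub_self z] at hG
  refine (harmonicAt_congr_nhds ?_).2 ((harmonicAt_const (logPotential ζ ρ z)).add
    (hG.fun_comp (f := fun w => w - z) (by fun_prop)).harmonicAt_re)
  filter_upwards [ball_mem_nhds z (half_pos hδ)] with w hw
  have hadd := logPotential_add_eq hζ hC hδ hdist (h := w - z)
    (by rwa [mem_ball_zero_iff, ← mem_ball_iff_norm])
  rwa [add_sub_cancel] at hadd

end LogPotential

section RadialSelection

variable {ζ : ℝ → ℂ} {x₀ z : ℂ} {ρ r : ℝ}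

lemma add_mul_log_le_mul_log {x : ℝ} (hρ : 0 < ρ) (hx : 0 ≤ x) :
    x * log ρ + x - ρ ≤ x * log x := by
  rcases hx.eq_or_lt with rfl | hx
  · simpa using hρ.le
  · have h := mul_le_mul_of_nonneg_left (one_sub_inv_le_log_of_pos (div_pos hx hρ)) hx.le
    rw [log_div hx.ne' hρ.ne', inv_div, mul_sub, mul_div_cancel₀ _ hx.ne'] at h
    linarith

lemma le_integral_log_sub {d : ℝ} (hρ : 0 < ρ) (hd : 0 ≤ d) :
    ρ * log ρ - 2 * ρ ≤ ∫ t in (0 : ℝ)..ρ, log (d - t) := by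
  rw [intervalIntegral.integral_comp_sub_left, integral_log, sub_zero]
  rcases le_or_gt d ρ with h | h
  · rw [← log_neg_eq_log (d - ρ), neg_sub]
    linarith [add_mul_log_le_mul_log hρ hd, add_mul_log_le_mul_log hρ (sub_nonneg.2 h)]
  · have hmul : (d - ρ) * log (d - ρ) ≤ (d - ρ) * log d :=
      mul_le_mul_of_nonneg_left (log_le_log (by linarith) (by linarith)) (by linarith)
    have hρd : ρ * log ρ ≤ ρ * log d := by gcongr
    linarith

lemma abs_norm_sub_sub_le_norm_sub {t : ℝ} (ht : ‖ζ t - x₀‖ = t) :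
    |‖z - x₀‖ - t| ≤ ‖z - ζ t‖ := by
  simpa only [sub_sub_sub_cancel_right, ht] using abs_norm_sub_norm_le (z - x₀) (ζ t - x₀)

lemma le_logPotential (hρ : 0 < ρ) (hζ : ∀ t ∈ Icc 0 ρ, ‖ζ t - x₀‖ = t)
    (hint : IntervalIntegrable (fun t => log ‖z - ζ t‖) volume 0 ρ) :
    ρ * log ρ - 2 * ρ ≤ logPotential ζ ρ z := by
  refine (le_integral_log_sub hρ (norm_nonneg (z - x₀))).trans
    (intervalIntegral.integral_mono_ae_restrict hρ.le ?_ hint ?_)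
  · simpa using (intervalIntegral.intervalIntegrable_log' (a := ‖z - x₀‖)
      (b := ‖z - x₀‖ - ρ)).comp_sub_left ‖z - x₀‖
  · filter_upwards [ae_restrict_of_ae (Measure.ae_ne volume ‖z - x₀‖),
      ae_restrict_mem measurableSet_Icc] with t hne ht
    rw [← log_abs]
    exact log_le_log (abs_pos.2 (sub_ne_zero.2 hne.symm)) (abs_norm_sub_sub_le_norm_sub (hζ t ht))

lemma mul_log_sub_le_logPotential (hρ : 0 < ρ) (hζ : ∀ t ∈ Icc 0 ρ, ‖ζ t - x₀‖ = t)
    (hint : IntervalIntegrable (fun t => log ‖z - ζ t‖) volume 0 ρ) (hρr : ρ < r)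
    (hz : r ≤ ‖z - x₀‖) : ρ * log (r - ρ) ≤ logPotential ζ ρ z := by
  have hmono : ∫ _ in (0 : ℝ)..ρ, log (r - ρ) ≤ logPotential ζ ρ z :=
    intervalIntegral.integral_mono_on hρ.le intervalIntegrable_const hint fun t ht =>
      log_le_log (sub_pos.2 hρr) ((sub_le_sub hz ht.2).trans
        ((le_abs_self _).trans (abs_norm_sub_sub_le_norm_sub (hζ t ht))))
  simpa using hmono

lemma logPotential_le_mul_log (hρ : 0 < ρ) (hζ : ∀ t ∈ Icc 0 ρ, ‖ζ t - x₀‖ = t)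
    (hint : IntervalIntegrable (fun t => log ‖z - ζ t‖) volume 0 ρ) (hne : ∀ t, z ≠ ζ t)
    (hz : ‖z - x₀‖ ≤ ρ) : logPotential ζ ρ z ≤ ρ * log (2 * ρ) := by
  have hmono : logPotential ζ ρ z ≤ ∫ _ in (0 : ℝ)..ρ, log (2 * ρ) := by
    refine intervalIntegral.integral_mono_on hρ.le hint intervalIntegrable_const fun t ht => ?_
    refine log_le_log (norm_pos_iff.2 (sub_ne_zero.2 (hne t))) ?_
    rw [← sub_sub_sub_cancel_right z (ζ t) x₀]
    exact (norm_sub_le _ _).trans (by rw [hζ t ht]; linarith [ht.2])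
  simpa using hmono

theorem exists_radial_selection {γ : ℝ → ℂ} (hγ : Continuous γ) {b : ℝ} (hb : 0 ≤ b) :
    ∃ ζ : ℝ → ℂ, Measurable ζ ∧ (∀ t, ζ t ∈ range γ) ∧
      ∀ t ∈ Icc 0 ‖γ b - γ 0‖, ‖ζ t - γ 0‖ = t := by
  set g : ℝ → ℝ := fun θ => ‖γ θ - γ 0‖
  have hg : Continuous g := by fun_prop
  have hg₀ : g 0 = 0 := by simp [g]
  set S : ℝ → Set ℝ := fun t => {θ ∈ Icc 0 b | min t (g b) ≤ g θ}
  have hne (t : ℝ) : (S t).Nonempty := ⟨b, ⟨hb, le_rfl⟩, min_le_right _ _⟩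
  have hbdd (t : ℝ) : BddBelow (S t) := ⟨0, fun θ h => h.1.1⟩
  -- `sInf (S t)` is the first time at which the curve reaches distance `t` from its origin.
  have hfirst (t : ℝ) : sInf (S t) ∈ S t :=
    (isClosed_Icc.inter (isClosed_le continuous_const hg)).csInf_mem (hne t) (hbdd t)
  have hmono : Monotone fun t => sInf (S t) := fun t t' h =>
    csInf_le_csInf (hbdd t) (hne t') fun θ hθ => ⟨hθ.1, (min_le_min_right _ h).trans hθ.2⟩
  refine ⟨fun t => γ (sInf (S t)), hγ.measurable.comp hmono.measurable,
    fun t => mem_range_self _, fun t ht => ?_⟩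
  have hmin : min t (g b) = t := min_eq_left ht.2
  have hge : t ≤ g (sInf (S t)) := hmin.symm.trans_le (hfirst t).2
  obtain ⟨θ, hθ, hθt⟩ := intermediate_value_Icc (hfirst t).1.1 hg.continuousOn
    ⟨hg₀.trans_le ht.1, hge⟩
  have hθS : θ ∈ S t := ⟨⟨hθ.1, hθ.2.trans (hfirst t).1.2⟩, by rw [hmin, hθt]⟩
  rwa [le_antisymm hθ.2 (csInf_le (hbdd t) hθS)] at hθt

lemma exists_radius_le_log_div {b : ℝ} (hr : 0 < r) (hb : 0 < b) (A : ℝ) :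
    ∃ ρ, 0 < ρ ∧ ρ < r ∧ ρ < b ∧ A ≤ log ((r - ρ) / ρ) := by
  have hsub : Tendsto (fun ρ : ℝ => r - ρ) (𝓝[>] 0) (𝓝 r) := by
    simpa only [sub_zero] using (by fun_prop : Continuous fun ρ : ℝ => r - ρ).tendsto' 0 _ rfl
      |>.mono_left nhdsWithin_le_nhds
  have hlog : Tendsto (fun ρ : ℝ => log ((r - ρ) / ρ)) (𝓝[>] 0) atTop :=
    tendsto_log_atTop.comp (hsub.pos_mul_atTop hr tendsto_inv_nhdsGT_zero)
  obtain ⟨ρ, hA, hρ₀, hρ⟩ := ((hlog.eventually_ge_atTop A).and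
    (Ioo_mem_nhdsGT (lt_min hr hb))).exists
  exact ⟨ρ, hρ₀, hρ.trans_le (min_le_left _ _), hρ.trans_le (min_le_right _ _), hA⟩

theorem hasBarrier_of_curve {D : Set ℂ} (hD : IsOpen D) {γ : ℝ → ℂ} (hγ : Continuous γ)
    (hγD : ∀ θ, γ θ ∉ D) {b : ℝ} (hb : 0 ≤ b) (hne : γ b ≠ γ 0) : HasBarrier D (γ 0) := by
  intro r hr ε hε
  obtain ⟨ζ, hζm, hζγ, hζb⟩ := exists_radial_selection hγ hb
  have hζD (t : ℝ) : ζ t ∉ D := by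
    obtain ⟨θ, hθ⟩ := hζγ t
    exact hθ ▸ hγD θ
  obtain ⟨ρ, hρ, hρr, hρb, hA⟩ := exists_radius_le_log_div hr
    (norm_pos_iff.2 (sub_ne_zero.2 hne)) (4 / ε)
  have hζ : ∀ t ∈ Icc 0 ρ, ‖ζ t - γ 0‖ = t := fun t ht => hζb t ⟨ht.1, ht.2.trans hρb.le⟩
  have hC : ∀ t ∈ uIoc 0 ρ, ‖ζ t‖ ≤ ‖γ 0‖ + ρ := fun t ht => by
    rw [uIoc_of_le hρ.le] at ht
    exact (norm_le_norm_add_norm_sub (γ 0) (ζ t)).trans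
      (by rw [norm_sub_rev, hζ t ⟨ht.1.le, ht.2⟩]; linarith [ht.2])
  have hint : ∀ z ∈ D, IntervalIntegrable (fun t => log ‖z - ζ t‖) volume 0 ρ := fun z hz => by
    obtain ⟨δ, hδ, hsub⟩ := Metric.isOpen_iff.1 hD z hz
    exact intervalIntegrable_log_norm_sub hζm hC hδ fun t =>
      le_norm_sub_of_ball_subset hsub (hζD t)
  rw [log_div (by linarith) hρ.ne'] at hA
  set A := log (r - ρ) - log ρ
  have hA₀ : 0 < A + 2 := by linarith [show 0 < 4 / ε by positivity]
  -- The potential lies above `ρ * (log ρ - 2)` everywhere, above `ρ * log (r - ρ)` far away and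
  -- below `ρ * (log ρ + log 2)` close to `γ 0`; the normalisation is affine.
  set w : ℂ → ℝ := (ρ * (A + 2))⁻¹ • (logPotential ζ ρ + fun _ => ρ * (2 - log ρ)) with hw
  have hw_apply (z : ℂ) : w z = (logPotential ζ ρ z + ρ * (2 - log ρ)) / (ρ * (A + 2)) :=
    (div_eq_inv_mul _ _).symm
  refine ⟨w, ((harmonicOnNhd_logPotential hD hζm hC hζD).add
    (harmonicOnNhd_const _)).const_smul, fun z hz => ?_, fun z hz hzr => ?_, ?_⟩
  · rw [hw_apply]
    exact div_nonneg (by linarith [le_logPotential hρ hζ (hint z hz)]) (by positivity)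
  · rw [hw_apply, one_le_div (by positivity)]
    linarith [mul_log_sub_le_logPotential hρ hζ (hint z hz) hρr hzr]
  · filter_upwards [nhdsWithin_le_nhds (ball_mem_nhds (γ 0) hρ), self_mem_nhdsWithin] with z hz hzD
    have hnear := logPotential_le_mul_log hρ hζ (hint z hzD) (fun t h => hζD t (h ▸ hzD))
      (mem_ball_iff_norm.1 hz).le
    rw [log_mul two_ne_zero hρ.ne'] at hnear
    have hε4 : 4 < ε * (A + 2) := by
      rw [div_le_iff₀ hε] at hA
      linarith
    rw [hw_apply, div_lt_iff₀ (by positivity)]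
    nlinarith [log_two_lt_d9]

end RadialSelection

/-! ### Continuous logarithms and separation -/

/-- `g` has a continuous logarithm on `K`. Whether the functions `z ↦ (z - p) ^ m` have continuous
logarithms on a plane set replaces the winding number in the separation arguments. -/
def HasContinuousLog {X : Type*} [TopologicalSpace X] (g : X → ℂ) (K : Set X) : Prop :=
  ∃ L : X → ℂ, ContinuousOn L K ∧ ∀ x ∈ K, Complex.exp (L x) = g x

section ContinuousLog

variable {X : Type*} [TopologicalSpace X]

lemma HasContinuousLog.mono {g : X → ℂ} {K K' : Set X} (h : HasContinuousLog g K) (hK : K' ⊆ K) :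
    HasContinuousLog g K' :=
  let ⟨L, hL, hg⟩ := h
  ⟨L, hL.mono hK, fun x hx => hg x (hK hx)⟩

lemma exists_continuous_log [SimplyConnectedSpace X] [LocallyPathConnectedSpace X] {g : X → ℂ}
    (hg : Continuous g) (hg₀ : ∀ x, g x ≠ 0) :
    ∃ L : X → ℂ, Continuous L ∧ ∀ x, Complex.exp (L x) = g x := by
  obtain ⟨x₀⟩ : Nonempty X := inferInstance
  obtain ⟨F, ⟨-, hF⟩, -⟩ := Complex.isCoveringMap_exp.existsUnique_continuousMap_lifts
    (⟨fun x => ⟨g x, hg₀ x⟩, by fun_prop⟩ : C(X, {z : ℂ // z ≠ 0})) x₀ (Complex.log (g x₀))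
    (Subtype.ext (Complex.exp_log (hg₀ x₀)))
  exact ⟨F, F.continuous, fun x => congrArg Subtype.val (congrFun hF x)⟩

lemma exists_int_log_eq_add {S : Set X} (hS : IsPreconnected S) {L₁ L₂ : X → ℂ}
    (h₁ : ContinuousOn L₁ S) (h₂ : ContinuousOn L₂ S)
    (h : ∀ x ∈ S, Complex.exp (L₁ x) = Complex.exp (L₂ x)) :
    ∃ n : ℤ, ∀ x ∈ S, L₁ x = L₂ x + n * (2 * π * Complex.I) := by
  rcases S.eq_empty_or_nonempty with rfl | ⟨x₀, hx₀⟩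
  · exact ⟨0, by simp⟩
  choose! n hn using fun x hx => Complex.exp_eq_exp_iff_exists_int.1 (h x hx)
  have hval : EqOn (fun x => (n x : ℝ)) (fun x => ((L₁ x - L₂ x) / (2 * π * Complex.I)).re) S := by
    intro x hx
    simp [hn x hx]
  have hcont : ContinuousOn n S := by
    rw [Int.isClosedEmbedding_coe_real.isInducing.continuousOn_iff]
    exact (Complex.continuous_re.comp_continuousOn ((h₁.sub h₂).div_const _)).congr hval
  exact ⟨n x₀, fun x hx => by rw [hn x hx, hS.constant hcont hx hx₀]⟩

lemma HasContinuousLog.union {g : X → ℂ} {A B : Set X} (hA : HasContinuousLog g A)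
    (hB : HasContinuousLog g B) (hAo : IsOpen A) (hBo : IsOpen B) (hAB : IsPreconnected (A ∩ B)) :
    HasContinuousLog g (A ∪ B) := by
  classical
  obtain ⟨LA, hLA, hexpA⟩ := hA
  obtain ⟨LB, hLB, hexpB⟩ := hB
  obtain ⟨n, hn⟩ := exists_int_log_eq_add hAB (hLA.mono inter_subset_left)
    (hLB.mono inter_subset_right) fun x hx => (hexpA x hx.1).trans (hexpB x hx.2).symm
  have heqA : EqOn (A.piecewise LA fun x => LB x + n * (2 * π * Complex.I)) LA A :=
    piecewise_eqOn _ _ _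
  have heqB : EqOn (A.piecewise LA fun x => LB x + n * (2 * π * Complex.I))
      (fun x => LB x + n * (2 * π * Complex.I)) B := fun x hx => by
    by_cases hxA : x ∈ A
    · exact (heqA hxA).trans (hn x ⟨hxA, hx⟩)
    · exact piecewise_eq_of_notMem _ _ _ hxA
  refine ⟨_, (hLA.congr heqA).union_of_isOpen ((hLB.add continuousOn_const).congr heqB) hAo hBo, ?_⟩
  rintro x (hx | hx)
  · rw [heqA hx, hexpA x hx]
  · rw [heqB hx, Complex.exp_add, Complex.exp_int_mul_two_pi_mul_I, mul_one, hexpB x hx]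

lemma exists_continuousOn_image_eq {Y Z : Type*} [TopologicalSpace Y] [T2Space Y]
    [TopologicalSpace Z] [Nonempty X] {K : Set X} (hK : IsCompact K) {γ : X → Y}
    (hγ : ContinuousOn γ K) {M : X → Z} (hM : ContinuousOn M K)
    (h : ∀ s ∈ K, ∀ t ∈ K, γ s = γ t → M s = M t) :
    ∃ M' : Y → Z, ContinuousOn M' (γ '' K) ∧ ∀ t ∈ K, M' (γ t) = M t := by
  set M' : Y → Z := M ∘ Function.invFunOn γ K
  have hM' : ∀ t ∈ K, M' (γ t) = M t := fun t ht =>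
    have hex : ∃ s ∈ K, γ s = γ t := ⟨t, ht, rfl⟩
    h _ (Function.invFunOn_mem hex) t ht (Function.invFunOn_eq hex)
  refine ⟨M', continuousOn_iff_isClosed.2 fun s hs => ?_, hM'⟩
  obtain ⟨C, hC, hCs⟩ := continuousOn_iff_isClosed.1 hM s hs
  refine ⟨γ '' (K ∩ C), ((hK.inter_right hC).image_of_continuousOn
    (hγ.mono inter_subset_left)).isClosed, ?_⟩
  ext z
  constructor
  · rintro ⟨hz, t, ht, rfl⟩
    rw [mem_preimage, hM' t ht] at hz
    exact ⟨⟨t, ⟨ht, (hCs.subset ⟨hz, ht⟩).1⟩, rfl⟩, t, ht, rfl⟩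
  · rintro ⟨⟨t, ⟨ht, htC⟩, rfl⟩, -⟩
    refine ⟨?_, t, ht, rfl⟩
    rw [mem_preimage, hM' t ht]
    exact (hCs.superset ⟨htC, ht⟩).1

lemma not_hasContinuousLog_sphere {p : ℂ} {R : ℝ} (hR : 0 < R) {m : ℤ} (hm : m ≠ 0) :
    ¬ HasContinuousLog (fun z => (z - p) ^ m) (sphere p R) := by
  rintro ⟨L, hL, hg⟩
  have hmem (θ : ℝ) : circleMap p R θ ∈ sphere p R := circleMap_mem_sphere p hR.le θ
  obtain ⟨n, hn⟩ := exists_int_log_eq_add isPreconnected_univ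
    (L₁ := fun θ => L (circleMap p R θ)) (L₂ := fun θ : ℝ => m * (Complex.log R + θ * Complex.I))
    (hL.comp (continuous_circleMap p R).continuousOn fun θ _ => hmem θ) (by fun_prop)
    fun θ _ => by
      rw [hg _ (hmem θ)]
      beta_reduce
      rw [circleMap_sub_center, circleMap_zero, Complex.exp_int_mul,
        Complex.exp_add, Complex.exp_log (Complex.ofReal_ne_zero.2 hR.ne')]
  have h₀ := hn 0 (mem_univ _)
  have h₁ := hn (0 + 2 * π) (mem_univ _)
  rw [periodic_circleMap p R 0, h₀] at h₁
  have hzero : (m : ℂ) * (2 * π * Complex.I) = 0 := by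
    push_cast at h₁
    linear_combination -h₁
  exact mul_ne_zero (Int.cast_ne_zero.2 hm) Complex.two_pi_I_ne_zero hzero

/-- A logarithm on the frontier would let us replace `(z - p) ^ m` inside `U` by a function without
zeros, extending it from a large circle to the whole plane. -/
theorem not_hasContinuousLog_frontier {U : Set ℂ} (hU : IsOpen U) (hb : Bornology.IsBounded U)
    {p : ℂ} (hp : p ∈ U) {g : ℂ → ℂ} (hg : ContinuousOn g (closure U))
    (hg₀ : ∀ z ∈ closure U, g z ≠ 0) {m : ℤ} (hm : m ≠ 0) :
    ¬ HasContinuousLog (fun z => (z - p) ^ m * g z) (frontier U) := by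
  classical
  rintro ⟨L, hL, hLg⟩
  obtain ⟨L', hL'⟩ := ContinuousMap.exists_restrict_eq (isClosed_frontier (s := U))
    (⟨(frontier U).domRestrict L, hL.domRestrict⟩ : C(frontier U, ℂ))
  have hLL (z : ℂ) (hz : z ∈ frontier U) : L' z = L z := congrArg (fun F => F ⟨z, hz⟩) hL'
  have hne {z : ℂ} (hz : z ∉ U) : z - p ≠ 0 := sub_ne_zero.2 fun h => hz (h ▸ hp)
  set F : ℂ → ℂ := U.piecewise (fun z => Complex.exp (L' z) / g z) (fun z => (z - p) ^ m)
  have hFc : Continuous F := by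
    refine continuous_piecewise (fun z hz => ?_) ?_ ?_
    · rw [hLL z hz, hLg z hz, mul_div_cancel_right₀ _ (hg₀ z (frontier_subset_closure hz))]
    · exact (Complex.continuous_exp.comp L'.continuous).continuousOn.div hg hg₀
    · rw [hU.isClosed_compl.closure_eq]
      exact ContinuousOn.zpow₀ (by fun_prop) _ fun z hz => .inl (hne hz)
  have hF₀ (z : ℂ) : F z ≠ 0 := by
    by_cases hz : z ∈ U
    · simpa only [F, piecewise_eq_of_mem _ _ _ hz] using
        div_ne_zero (Complex.exp_ne_zero _) (hg₀ z (subset_closure hz))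
    · simpa only [F, piecewise_eq_of_notMem _ _ _ hz] using zpow_ne_zero _ (hne hz)
  obtain ⟨M, hM, hMF⟩ := exists_continuous_log hFc hF₀
  obtain ⟨R, hR, hUR⟩ := hb.subset_ball_lt 0 p
  refine not_hasContinuousLog_sphere (p := p) hR hm ⟨M, hM.continuousOn, fun z hz => ?_⟩
  exact (hMF z).trans (piecewise_eq_of_notMem _ _ _ fun hzU => (hUR hzU).ne hz)

lemma exists_continuous_log_of_homotopy {H : unitInterval × X → ℂ} (hH : Continuous H)
    (hne : ∀ y, H y ≠ 0) (h₀ : ∀ x, H (0, x) = 1) :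
    ∃ L : X → ℂ, Continuous L ∧ ∀ x, Complex.exp (L x) = H (1, x) := by
  let H' : C(unitInterval × X, {z : ℂ // z ≠ 0}) := ⟨fun y => ⟨H y, hne y⟩, by fun_prop⟩
  have hH'₀ (x : X) : H' (0, x) =
      (fun z : ℂ => (⟨_, z.exp_ne_zero⟩ : {z : ℂ // z ≠ 0})) (ContinuousMap.const X (0 : ℂ) x) :=
    Subtype.ext (by simp [H', h₀])
  have hF := Complex.isCoveringMap_exp.liftHomotopy_lifts H' (ContinuousMap.const X 0) hH'₀
  set F := Complex.isCoveringMap_exp.liftHomotopy H' (ContinuousMap.const X 0) hH'₀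
  exact ⟨fun x => F (1, x), by fun_prop, fun x => congrArg Subtype.val (congrFun hF (1, x))⟩

theorem hasContinuousLog_div_of_joinedIn {C : Set ℂ} {p q : ℂ} (h : JoinedIn C p q) :
    HasContinuousLog (fun z => (z - q) / (z - p)) Cᶜ := by
  obtain ⟨γ, hγ⟩ := h
  have hne (t : unitInterval) (z : (Cᶜ : Set ℂ)) : (z : ℂ) - γ t ≠ 0 :=
    sub_ne_zero.2 fun h => z.2 (h ▸ hγ t)
  have hne₀ (z : (Cᶜ : Set ℂ)) : (z : ℂ) - p ≠ 0 := by simpa using hne 0 z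
  obtain ⟨L, hL, hexp⟩ := exists_continuous_log_of_homotopy
    (H := fun x : unitInterval × (Cᶜ : Set ℂ) => ((x.2 : ℂ) - γ x.1) / (x.2 - p))
    (.div (by fun_prop) (by fun_prop) fun x => hne₀ x.2)
    (fun x => div_ne_zero (hne _ _) (hne₀ _)) fun x => by simp [div_self (hne₀ x)]
  refine ⟨Function.extend (↑) L 0, ?_, fun z hz => ?_⟩
  · rw [continuousOn_iff_continuous_domRestrict]
    exact hL.congr fun z => (Subtype.val_injective.extend_apply L 0 z).symm
  · have hz' := Subtype.val_injective.extend_apply L 0 (⟨z, hz⟩ : (Cᶜ : Set ℂ))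
    simpa [hz'] using hexp ⟨z, hz⟩

theorem hasContinuousLog_div_of_isPreconnected {K C : Set ℂ} (hK : IsClosed K)
    (hC : IsPreconnected C) (hCK : Disjoint C K) {p q : ℂ} (hp : p ∈ C) (hq : q ∈ C) :
    HasContinuousLog (fun z => (z - q) / (z - p)) K := by
  have hCK' : C ⊆ Kᶜ := hCK.subset_compl_right
  have hpath : IsPathConnected (connectedComponentIn Kᶜ p) :=
    hK.isOpen_compl.connectedComponentIn.isConnected_iff_isPathConnected.1
      (isConnected_connectedComponentIn_iff.2 (hCK' hp))
  have hsub := hC.subset_connectedComponentIn hp hCK'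
  refine (hasContinuousLog_div_of_joinedIn (hpath.joinedIn p (hsub hp) q (hsub hq))).mono ?_
  exact subset_compl_comm.1 (connectedComponentIn_subset _ _)

end ContinuousLog

section Components

lemma connectedComponentIn_eq_of_mem_closure {X : Type*} [TopologicalSpace X]
    [LocallyConnectedSpace X] {U : Set X} (hU : IsOpen U) {p x : X} (hx : x ∈ U)
    (hxp : x ∈ closure (connectedComponentIn U p)) :
    connectedComponentIn U p = connectedComponentIn U x := by
  obtain ⟨y, hyx, hyp⟩ := mem_closure_iff.1 hxp _ hU.connectedComponentIn
    (mem_connectedComponentIn hx)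
  exact (connectedComponentIn_eq hyp).trans (connectedComponentIn_eq hyx).symm

lemma frontier_connectedComponentIn_compl_subset {X : Type*} [TopologicalSpace X]
    [LocallyConnectedSpace X] {K : Set X} (hK : IsClosed K) (p : X) :
    frontier (connectedComponentIn Kᶜ p) ⊆ K := by
  intro x hx
  by_contra hxK
  rw [hK.isOpen_compl.connectedComponentIn.frontier_eq,
    connectedComponentIn_eq_of_mem_closure hK.isOpen_compl hxK hx.1] at hx
  exact hx.2 (mem_connectedComponentIn hxK)

lemma isPreconnected_compl_closedBall {R : ℝ} (hR : 0 < R) :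
    IsPreconnected (closedBall (0 : ℂ) R)ᶜ := by
  have himage : (closedBall (0 : ℂ) R)ᶜ = Complex.exp '' {w : ℂ | log R < w.re} := by
    ext z
    rw [mem_compl_iff, mem_closedBall_zero_iff, not_le]
    constructor
    · intro hz
      refine ⟨Complex.log z, ?_, Complex.exp_log (norm_pos_iff.1 (hR.trans hz))⟩
      simpa only [mem_ofPred_eq, Complex.log_re] using log_lt_log hR hz
    · rintro ⟨w, hw, rfl⟩
      rw [Complex.norm_exp]
      exact (log_lt_iff_lt_exp hR).1 hw
  rw [himage]
  exact (convex_halfSpace_re_gt _).isPreconnected.image _ Complex.continuous_exp.continuousOn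

lemma exists_unbounded_connectedComponentIn_compl {K : Set ℂ} (hK : Bornology.IsBounded K) :
    ∃ q ∈ Kᶜ, ¬ Bornology.IsBounded (connectedComponentIn Kᶜ q) ∧
      ∀ p, ¬ Bornology.IsBounded (connectedComponentIn Kᶜ p) →
        connectedComponentIn Kᶜ p = connectedComponentIn Kᶜ q := by
  obtain ⟨R, hR, hKR⟩ := hK.subset_closedBall_lt 0 0
  have hout : ¬ Bornology.IsBounded (closedBall (0 : ℂ) R)ᶜ := fun h =>
    NormedSpace.unbounded_univ ℝ ℂ 
      (union_compl_self (closedBall (0 : ℂ) R) ▸ isBounded_closedBall.union h)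
  have hmem {p : ℂ} (hp : ¬ Bornology.IsBounded (connectedComponentIn Kᶜ p)) :
      ∃ z ∈ connectedComponentIn Kᶜ p, z ∈ (closedBall (0 : ℂ) R)ᶜ :=
    not_subset.1 fun h => hp (isBounded_closedBall.subset h)
  obtain ⟨q, hq⟩ : (closedBall (0 : ℂ) R)ᶜ.Nonempty := by
    by_contra! h
    exact hout (h ▸ Bornology.isBounded_empty)
  have hsub := compl_subset_compl.2 hKR
  refine ⟨q, hsub hq, fun h => hout (h.subset
    ((isPreconnected_compl_closedBall hR).subset_connectedComponentIn hq hsub)), fun p hp => ?_⟩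
  obtain ⟨z, hz, hzR⟩ := hmem hp
  rw [connectedComponentIn_eq hz]
  exact connectedComponentIn_eq
    ((isPreconnected_compl_closedBall hR).subset_connectedComponentIn hzR hsub hq)

lemma isPreconnected_compl_of_forall_unbounded {K : Set ℂ} (hK : Bornology.IsBounded K)
    (h : ∀ p ∈ Kᶜ, ¬ Bornology.IsBounded (connectedComponentIn Kᶜ p)) : IsPreconnected Kᶜ := by
  obtain ⟨q, -, -, huniq⟩ := exists_unbounded_connectedComponentIn_compl hK
  have heq : Kᶜ = connectedComponentIn Kᶜ q :=
    subset_antisymm (fun p hp => huniq p (h p hp) ▸ mem_connectedComponentIn hp)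
      (connectedComponentIn_subset _ _)
  rw [heq]
  exact isPreconnected_connectedComponentIn

lemma not_isBounded_connectedComponentIn_of_hasContinuousLog {K : Set ℂ} (hK : IsClosed K) {p : ℂ}
    (hp : p ∈ Kᶜ) (hlog : HasContinuousLog (fun z => z - p) K) :
    ¬ Bornology.IsBounded (connectedComponentIn Kᶜ p) := fun hb =>
  not_hasContinuousLog_frontier (g := fun _ => 1) hK.isOpen_compl.connectedComponentIn hb
    (mem_connectedComponentIn hp) continuousOn_const (fun _ _ => one_ne_zero) (m := 1) one_ne_zero
    (by simpa only [zpow_one, mul_one] using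
      hlog.mono (frontier_connectedComponentIn_compl_subset hK p))

theorem isPreconnected_compl_image_Icc {α : ℝ → ℂ} {a b : ℝ} (hab : a ≤ b)
    (hα : ContinuousOn α (Icc a b)) (hi : InjOn α (Icc a b)) :
    IsPreconnected (α '' Icc a b)ᶜ := by
  have hA : IsCompact (α '' Icc a b) := isCompact_Icc.image_of_continuousOn hα
  refine isPreconnected_compl_of_forall_unbounded hA.isBounded fun p hp =>
    not_isBounded_connectedComponentIn_of_hasContinuousLog hA.isClosed hp ?_
  obtain ⟨M, hM, hexp⟩ := exists_continuous_log (g := fun t => IccExtend hab (α ∘ (↑)) t - p)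
    ((hα.domRestrict.Icc_extend' (h := hab)).sub continuous_const)
    fun t => sub_ne_zero.2 fun h => hp ⟨_, (projIcc a b hab t).2, h⟩
  obtain ⟨M', hM', hMM⟩ := exists_continuousOn_image_eq isCompact_Icc hα hM.continuousOn
    fun s hs t ht h => by rw [hi hs ht h]
  refine ⟨M', hM', ?_⟩
  rintro _ ⟨t, ht, rfl⟩
  rw [hMM t ht, hexp, IccExtend_of_mem _ _ ht, Function.comp_apply]

end Components

/-! ### The Jordan curve theorem -/

/-- `γ` parametrises a simple closed curve by the line, injectively up to the period `2 * π`. -/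
structure IsSimpleLoop {X : Type*} [TopologicalSpace X] (γ : ℝ → X) : Prop where
  continuous : Continuous γ
  eq_iff : ∀ s t, γ s = γ t ↔ ∃ n : ℤ, s = t + n * (2 * π)

namespace IsSimpleLoop

section Parametrisation

variable {X : Type*} [TopologicalSpace X] {γ : ℝ → X}

lemma periodic (h : IsSimpleLoop γ) : Function.Periodic γ (2 * π) := fun t =>
  (h.eq_iff _ _).2 ⟨1, by simp⟩

lemma eq_of_mem_Ico (h : IsSimpleLoop γ) {a s t : ℝ} (hs : s ∈ Ico a (a + 2 * π))
    (ht : t ∈ Ico a (a + 2 * π)) (hst : γ s = γ t) : s = t := by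
  obtain ⟨n, hn⟩ := (h.eq_iff s t).1 hst
  have hlt : (n : ℝ) < 1 := by nlinarith [pi_pos, hs.2, ht.1]
  have hgt : (-1 : ℝ) < n := by nlinarith [pi_pos, hs.1, ht.2]
  obtain rfl : n = 0 := by
    have : n < 1 := by exact_mod_cast hlt
    have : -1 < n := by exact_mod_cast hgt
    omega
  simpa using hn

lemma injOn_Icc (h : IsSimpleLoop γ) {a b : ℝ} (hab : b < a + 2 * π) : InjOn γ (Icc a b) :=
  fun _ hs _ ht => h.eq_of_mem_Ico ⟨hs.1, hs.2.trans_lt hab⟩ ⟨ht.1, ht.2.trans_lt hab⟩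

lemma range_eq_image_Icc (h : IsSimpleLoop γ) (a : ℝ) : range γ = γ '' Icc a (a + 2 * π) :=
  (h.periodic.image_Icc two_pi_pos a).symm

lemma isCompact_range (h : IsSimpleLoop γ) : IsCompact (range γ) := by
  rw [h.range_eq_image_Icc 0]
  exact isCompact_Icc.image h.continuous

lemma exists_continuousOn_range_eq [T2Space X] (h : IsSimpleLoop γ) {Z : Type*}
    [TopologicalSpace Z] {M : ℝ → Z} (hM : Continuous M) (hper : Function.Periodic M (2 * π)) :
    ∃ M' : X → Z, ContinuousOn M' (range γ) ∧ ∀ t, M' (γ t) = M t := by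
  have hinv (s t : ℝ) (hst : γ s = γ t) : M s = M t := by
    obtain ⟨n, rfl⟩ := (h.eq_iff s t).1 hst
    exact hper.int_mul n t
  obtain ⟨M', hM', hMM⟩ := exists_continuousOn_image_eq (isCompact_Icc (a := 0) (b := 0 + 2 * π))
    h.continuous.continuousOn hM.continuousOn fun s _ t _ => hinv s t
  rw [← h.range_eq_image_Icc] at hM'
  refine ⟨M', hM', fun t => ?_⟩
  obtain ⟨s, hs, hst⟩ := (h.range_eq_image_Icc 0).subset (mem_range_self t)
  rw [← hst, hMM s hs, hinv s t hst]

lemma eq_or_eq_of_mem_image_inter (h : IsSimpleLoop γ) {z : X}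
    (hz : z ∈ γ '' Icc 0 π ∩ γ '' Icc π (2 * π)) : z = γ 0 ∨ z = γ π := by
  obtain ⟨⟨s, hs, rfl⟩, t, ht, hst⟩ := hz
  rcases ht.2.eq_or_lt with rfl | htlt
  · left
    rw [← hst, ← zero_add (2 * π), h.periodic]
  · right
    have hst' : t = s := h.eq_of_mem_Ico (a := 0) ⟨pi_pos.le.trans ht.1, by simpa using htlt⟩
      ⟨hs.1, by linarith [hs.2, pi_pos]⟩ hst
    rw [le_antisymm hs.2 (hst' ▸ ht.1)]

lemma comp_injective (h : IsSimpleLoop γ) {Y : Type*} [TopologicalSpace Y] {f : X → Y}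
    (hf : Continuous f) (hfi : Function.Injective f) : IsSimpleLoop (f ∘ γ) :=
  ⟨hf.comp h.continuous, fun s t => hfi.eq_iff.trans (h.eq_iff s t)⟩

lemma exists_comp_eq (h : IsSimpleLoop γ) {Y : Type*} [TopologicalSpace Y] {q : Y → X}
    (hq : IsEmbedding q) (hr : range γ ⊆ range q) : ∃ γ' : ℝ → Y, IsSimpleLoop γ' ∧ q ∘ γ' = γ := by
  choose γ' hγ' using fun t => hr (mem_range_self t)
  have hcomp : q ∘ γ' = γ := funext hγ'
  refine ⟨γ', ⟨hq.isInducing.continuous_iff.2 (hcomp ▸ h.continuous), fun s t => ?_⟩, hcomp⟩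
  rw [← h.eq_iff, ← hγ', ← hγ', hq.injective.eq_iff]

end Parametrisation

variable {γ : ℝ → ℂ}

lemma hasContinuousLog_div_of_isPreconnected_compl (h : IsSimpleLoop γ)
    (hJ : IsPreconnected (range γ)ᶜ) :
    HasContinuousLog (fun z => (z - γ π) / (z - γ 0)) {γ 0, γ π}ᶜ := by
  have hjoin {a b s t : ℝ} (hs : s ∈ Icc a b) (ht : t ∈ Icc a b) :
      JoinedIn (γ '' Icc a b) (γ s) (γ t) :=
    (((convex_Icc a b).isPathConnected ⟨s, hs⟩).image h.continuous).joinedIn _ ⟨s, hs, rfl⟩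
      _ ⟨t, ht, rfl⟩
  have hopen (a b : ℝ) : IsOpen (γ '' Icc a b)ᶜ :=
    (isCompact_Icc.image h.continuous).isClosed.isOpen_compl
  have hA := hasContinuousLog_div_of_joinedIn
    (hjoin (left_mem_Icc.2 pi_pos.le) (right_mem_Icc.2 pi_pos.le))
  have hπ : π ≤ 2 * π := by linarith [pi_pos]
  have hB := hasContinuousLog_div_of_joinedIn
    (hjoin (right_mem_Icc.2 hπ) (left_mem_Icc.2 hπ))
  rw [← zero_add (2 * π), h.periodic 0, zero_add] at hB
  refine (hA.union hB (hopen _ _) (hopen _ _) ?_).mono fun z hz => ?_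
  · rwa [← compl_union, ← image_union, Icc_union_Icc_eq_Icc pi_pos.le hπ, ← zero_add (2 * π),
      ← h.range_eq_image_Icc]
  · rw [← compl_inter]
    exact fun hz' => hz (h.eq_or_eq_of_mem_image_inter hz')

lemma not_isPreconnected_compl (h : IsSimpleLoop γ) : ¬ IsPreconnected (range γ)ᶜ := by
  intro hJ
  have hba : 0 < dist (γ π) (γ 0) := dist_pos.2 fun hba => pi_pos.ne' <|
    h.eq_of_mem_Ico (a := 0) ⟨pi_pos.le, by linarith [pi_pos]⟩ ⟨le_rfl, by linarith [pi_pos]⟩ hba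
  set r := dist (γ π) (γ 0) / 2
  have hr : 0 < r := half_pos hba
  have hb {z : ℂ} (hz : z ∈ closedBall (γ 0) r) : z ≠ γ π := by
    rintro rfl
    exact (half_lt_self hba).not_ge (mem_closedBall.1 hz)
  refine not_hasContinuousLog_frontier (p := γ 0) isOpen_ball isBounded_ball (mem_ball_self hr)
    (g := fun z => z - γ π) (by fun_prop) (fun z hz => sub_ne_zero.2 (hb
      (closure_ball_subset_closedBall hz))) (m := -1) (by norm_num) ?_
  rw [frontier_ball _ hr.ne']
  simp only [zpow_neg_one, inv_mul_eq_div]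
  refine (h.hasContinuousLog_div_of_isPreconnected_compl hJ).mono fun z hz => ?_
  rintro (rfl | rfl)
  · exact ne_of_mem_sphere hz hr.ne' rfl
  · exact hb (sphere_subset_closedBall hz) rfl

lemma exists_continuous_log_sub (h : IsSimpleLoop γ) {p : ℂ} (hp : p ∉ range γ) :
    ∃ (L : ℝ → ℂ) (n : ℤ), Continuous L ∧ (∀ t, Complex.exp (L t) = γ t - p) ∧
      ∀ t, L (t + 2 * π) = L t + n * (2 * π * Complex.I) := by
  obtain ⟨L, hL, hexp⟩ := exists_continuous_log (g := fun t => γ t - p)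
    (h.continuous.sub continuous_const) fun t => sub_ne_zero.2 fun ht => hp ⟨t, ht⟩
  obtain ⟨n, hn⟩ := exists_int_log_eq_add isPreconnected_univ
    (L₁ := fun t => L (t + 2 * π)) (L₂ := L) (by fun_prop) hL.continuousOn fun t _ => by
      rw [hexp, hexp, h.periodic]
  exact ⟨L, n, hL, hexp, fun t => hn t (mem_univ t)⟩

/-- The winding numbers `n₁`, `n₂` around `p`, `q` make `(z - p) ^ n₂ * (z - q) ^ (-n₁)` have
winding number zero, hence a logarithm, along the curve. -/
lemma connectedComponentIn_compl_eq_of_isBounded (h : IsSimpleLoop γ) {p q : ℂ}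
    (hp : p ∈ (range γ)ᶜ) (hq : q ∈ (range γ)ᶜ)
    (hbp : Bornology.IsBounded (connectedComponentIn (range γ)ᶜ p))
    (hbq : Bornology.IsBounded (connectedComponentIn (range γ)ᶜ q)) :
    connectedComponentIn (range γ)ᶜ p = connectedComponentIn (range γ)ᶜ q := by
  by_contra hne
  have hcl : IsClosed (range γ) := h.isCompact_range.isClosed
  obtain ⟨L₁, n₁, hL₁, hexp₁, hper₁⟩ := h.exists_continuous_log_sub hp
  obtain ⟨L₂, n₂, hL₂, hexp₂, hper₂⟩ := h.exists_continuous_log_sub hq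
  obtain rfl | hn₂ := eq_or_ne n₂ 0
  · obtain ⟨M, hM, hMM⟩ := h.exists_continuousOn_range_eq hL₂ fun t => by simp [hper₂]
    refine not_isBounded_connectedComponentIn_of_hasContinuousLog hcl hq ⟨M, hM, ?_⟩ hbq
    rintro _ ⟨t, rfl⟩
    rw [hMM, hexp₂]
  obtain ⟨M, hM, hMM⟩ := h.exists_continuousOn_range_eq (M := fun t => n₂ * L₁ t - n₁ * L₂ t)
    (by fun_prop) fun t => by simp only [hper₁, hper₂]; ring
  have hqz : ∀ z ∈ closure (connectedComponentIn (range γ)ᶜ p), z - q ≠ 0 := fun z hz hzq =>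
    hne (connectedComponentIn_eq_of_mem_closure hcl.isOpen_compl hq (sub_eq_zero.1 hzq ▸ hz))
  refine not_hasContinuousLog_frontier hcl.isOpen_compl.connectedComponentIn hbp
    (mem_connectedComponentIn hp) (g := fun z => (z - q) ^ (-n₁))
    (.zpow₀ (by fun_prop) _ fun z hz => .inl (hqz z hz)) (fun z hz => zpow_ne_zero _ (hqz z hz)) hn₂
    (HasContinuousLog.mono ⟨M, hM, ?_⟩ (frontier_connectedComponentIn_compl_subset hcl p))
  rintro _ ⟨t, rfl⟩
  rw [hMM, sub_eq_add_neg, Complex.exp_add, Complex.exp_int_mul, hexp₁, ← neg_mul,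
    ← Int.cast_neg, Complex.exp_int_mul, hexp₂]

lemma exists_image_Icc_of_notMem (h : IsSimpleLoop γ) {F : Set ℂ} (hF : IsClosed F)
    (hFγ : F ⊆ range γ) {t : ℝ} (ht : γ t ∉ F) :
    ∃ a b, a ≤ b ∧ b < a + 2 * π ∧ F ⊆ γ '' Icc a b := by
  obtain ⟨ε, hε, hball⟩ := Metric.isOpen_iff.1 (hF.isOpen_compl.preimage h.continuous) t ht
  obtain ⟨δ, hδ, hδε⟩ := exists_between (lt_min hε one_pos)
  obtain ⟨hδε, hδ1⟩ := lt_min_iff.1 hδε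
  refine ⟨t + δ, t + 2 * π - δ, by linarith [pi_gt_three], by linarith, fun z hz => ?_⟩
  obtain ⟨s, hs, rfl⟩ := (h.range_eq_image_Icc (t - δ)).subset (hFγ hz)
  refine ⟨s, ⟨?_, by linarith [hs.2]⟩, rfl⟩
  by_contra! hlt
  refine hball ?_ hz
  rw [mem_ball, Real.dist_eq, abs_lt]
  constructor <;> linarith [hs.1]

lemma frontier_eq_range (h : IsSimpleLoop γ) {U : Set ℂ} (hU : IsOpen U) (hne : U.Nonempty)
    (hUγ : U ⊆ (range γ)ᶜ) (hfr : frontier U ⊆ range γ) {q : ℂ} (hq : q ∈ (range γ)ᶜ)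
    (hqU : q ∉ U) : frontier U = range γ := by
  refine hfr.antisymm ?_
  rintro _ ⟨t, rfl⟩
  by_contra ht
  obtain ⟨a, b, hab, hba, hsub⟩ := h.exists_image_Icc_of_notMem isClosed_frontier hfr ht
  have hcompl : (range γ)ᶜ ⊆ (γ '' Icc a b)ᶜ := compl_subset_compl.2 (image_subset_range _ _)
  have hconn := isPreconnected_compl_image_Icc hab h.continuous.continuousOn (h.injOn_Icc hba)
  obtain ⟨x, hx⟩ := hne
  refine hqU (hconn.subset_of_closure_inter_subset hU ⟨x, hcompl (hUγ hx), hx⟩ ?_ (hcompl hq))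
  rintro z ⟨hzU, hz⟩
  by_contra hzU'
  exact hz (hsub (hU.frontier_eq ▸ ⟨hzU, hzU'⟩))

theorem exists_isConnected_compl (h : IsSimpleLoop γ) : ∃ U V : Set ℂ, IsOpen U ∧ IsOpen V ∧
    IsConnected U ∧ IsConnected V ∧ Disjoint U V ∧ U ∪ V = (range γ)ᶜ ∧ Bornology.IsBounded U ∧
      ¬ Bornology.IsBounded V ∧ frontier U = range γ ∧ frontier V = range γ := by
  have hcl : IsClosed (range γ) := h.isCompact_range.isClosed
  have hbd : Bornology.IsBounded (range γ) := h.isCompact_range.isBounded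
  obtain ⟨q, hq, hbq, huniq⟩ := exists_unbounded_connectedComponentIn_compl hbd
  obtain ⟨p, hp, hbp⟩ :
      ∃ p ∈ (range γ)ᶜ, Bornology.IsBounded (connectedComponentIn (range γ)ᶜ p) := by
    by_contra! hc
    exact h.not_isPreconnected_compl (isPreconnected_compl_of_forall_unbounded hbd hc)
  set C := connectedComponentIn (range γ)ᶜ with hC
  have hopen (z : ℂ) : IsOpen (C z) := hcl.isOpen_compl.connectedComponentIn
  have hsub (z : ℂ) : C z ⊆ (range γ)ᶜ := connectedComponentIn_subset _ _
  have hpp : p ∈ C p := mem_connectedComponentIn hp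
  have hqq : q ∈ C q := mem_connectedComponentIn hq
  have hdisj : Disjoint (C p) (C q) := Set.disjoint_left.2 fun z hzp hzq => hbq <| by
    rwa [hC, connectedComponentIn_eq hzq, ← connectedComponentIn_eq hzp]
  have hfr (z : ℂ) : frontier (C z) ⊆ range γ := frontier_connectedComponentIn_compl_subset hcl z
  refine ⟨C p, C q, hopen p, hopen q, isConnected_connectedComponentIn_iff.2 hp,
    isConnected_connectedComponentIn_iff.2 hq, hdisj, ?_, hbp, hbq,
    h.frontier_eq_range (hopen p) ⟨p, hpp⟩ (hsub p) (hfr p) hq (Set.disjoint_right.1 hdisj hqq),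
    h.frontier_eq_range (hopen q) ⟨q, hqq⟩ (hsub q) (hfr q) hp (Set.disjoint_left.1 hdisj hpp)⟩
  refine (union_subset (hsub p) (hsub q)).antisymm fun z hz => ?_
  by_cases hb : Bornology.IsBounded (C z)
  · left
    rw [hC, h.connectedComponentIn_compl_eq_of_isBounded hp hz hbp hb]
    exact mem_connectedComponentIn hz
  · right
    rw [← huniq z hb]
    exact mem_connectedComponentIn hz

end IsSimpleLoop

/-! ### Level sets and critical points of harmonic functions -/

section LevelSets

variable {D : Set ℂ} {u : ℂ → ℝ} {c : ℝ}

/-- By the maximum principle no piece of a superlevel set is detached from the frontier. -/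
lemma SubharmonicOn.superlevel_inter_frontier_nonempty (hu : SubharmonicOn u D) (hD : IsOpen D)
    (hb : Bornology.IsBounded D) (huc : ContinuousOn u (closure D)) {t t' : Set ℂ}
    (ht : IsClosed t) (ht' : IsClosed t') (hsub : {z ∈ closure D | c ≤ u z} ⊆ t ∪ t')
    (hne : ({z ∈ closure D | c ≤ u z} ∩ t').Nonempty)
    (hdisj : ¬ ({z ∈ closure D | c ≤ u z} ∩ (t ∩ t')).Nonempty) :
    ({z ∈ closure D | c ≤ u z} ∩ frontier D ∩ t').Nonempty := by
  set s := {z ∈ closure D | c ≤ u z}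
  have hs : IsClosed s := huc.preimage_isClosed_of_isClosed isClosed_closure isClosed_Ici
  have hsc : IsCompact s := hb.isCompact_closure.of_isClosed_subset hs fun z hz => hz.1
  by_contra hfr
  have hst' : s ∩ t' ⊆ D \ (s ∩ t) := by
    refine fun z hz => ⟨by_contra fun hzD => hfr ⟨z, ⟨hz.1, ?_⟩, hz.2⟩,
      fun hzt => hdisj ⟨z, hz.1, hzt.2, hz.2⟩⟩
    exact hD.frontier_eq ▸ ⟨hz.1.1, hzD⟩
  obtain ⟨V, hV, htV, hVD, hVc⟩ := exists_open_between_and_isCompact_closure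
    (hsc.inter_right ht') (hD.sdiff (hs.inter ht)) hst'
  have hVD' : closure V ⊆ D := hVD.trans sdiff_subset
  have hVb : Bornology.IsBounded V := hVc.isBounded.subset subset_closure
  have huV : ContinuousOn u (closure V) := huc.mono (hVD'.trans subset_closure)
  have hlt : ∀ x ∈ frontier V, u x < c := by
    intro x hx
    by_contra! hcx
    have hxV := frontier_subset_closure hx
    have hxs : x ∈ s := ⟨subset_closure (hVD' hxV), hcx⟩
    rcases hsub hxs with hxt | hxt'
    · exact (hVD hxV).2 ⟨hxs, hxt⟩
    · exact (hV.frontier_eq ▸ hx).2 (htV ⟨hxs, hxt'⟩)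
  obtain ⟨m, hmc, hm⟩ : ∃ m < c, ∀ x ∈ frontier V, u x ≤ m := by
    rcases (frontier V).eq_empty_or_nonempty with he | hne
    · exact ⟨c - 1, by linarith, by simp [he]⟩
    · obtain ⟨x, hx, hmax⟩ := (hVc.of_isClosed_subset isClosed_frontier
        frontier_subset_closure).exists_isMaxOn hne (huV.mono frontier_subset_closure)
      exact ⟨u x, hlt x hx, hmax⟩
  obtain ⟨z, hz⟩ := hne
  have hzm := (hu.mono (subset_closure.trans hVD')).le_of_le_frontier hV hVb huV hm z
    (subset_closure (htV hz))
  exact (hmc.trans_le hz.1.2).not_ge hzm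

theorem SubharmonicOn.isPreconnected_superlevel (hu : SubharmonicOn u D) (hD : IsOpen D)
    (hb : Bornology.IsBounded D) (huc : ContinuousOn u (closure D))
    (hfr : IsPreconnected ({z ∈ closure D | c ≤ u z} ∩ frontier D)) :
    IsPreconnected {z ∈ closure D | c ≤ u z} := by
  rw [isPreconnected_closed_iff] at hfr ⊢
  intro t t' ht ht' hsub hne hne'
  by_contra hdisj
  have hne_fr' := hu.superlevel_inter_frontier_nonempty hD hb huc ht ht' hsub hne' hdisj
  have hne_fr := hu.superlevel_inter_frontier_nonempty hD hb huc ht' ht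
    (by rwa [union_comm]) hne (by rwa [inter_comm t' t])
  obtain ⟨z, hz, hzt⟩ := hfr t t' ht ht' (inter_subset_left.trans hsub) hne_fr hne_fr'
  exact hdisj ⟨z, hz.1, hzt⟩

lemma le_cos_sub_iff {τ t : ℝ} (hc : c ≤ 1) (ht : t ∈ Icc (τ - π) (τ + π)) :
    c ≤ cos (t - τ) ↔ t ∈ Icc (τ - arccos c) (τ + arccos c) := by
  have habs : |t - τ| ≤ π := abs_sub_le_iff.2 ⟨by linarith [ht.2], by linarith [ht.1]⟩
  have hmem : t ∈ Icc (τ - arccos c) (τ + arccos c) ↔ |t - τ| ≤ arccos c := by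
    rw [abs_sub_le_iff, mem_Icc]
    constructor <;> rintro ⟨h₁, h₂⟩ <;> constructor <;> linarith
  rw [hmem, ← cos_abs]
  refine ⟨fun h => arccos_cos (abs_nonneg _) habs ▸ antitone_arccos h, fun h => ?_⟩
  rcases le_total c (-1) with hc₁ | hc₁
  · exact hc₁.trans (neg_one_le_cos _)
  · rw [← cos_arccos hc₁ hc]
    exact cos_le_cos_of_nonneg_of_le_pi (abs_nonneg _) (arccos_le_pi c) h

lemma IsSimpleLoop.isPreconnected_setOf_le_inter_range {γ : ℝ → ℂ} (hγ : IsSimpleLoop γ) {τ : ℝ}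
    (hu : ∀ t, u (γ t) = cos (t - τ)) : IsPreconnected ({z | c ≤ u z} ∩ range γ) := by
  rcases lt_or_ge 1 c with hc | hc
  · convert isPreconnected_empty
    refine eq_empty_of_forall_notMem ?_
    rintro _ ⟨hz, t, rfl⟩
    exact (hc.trans_le (hz.trans_eq (hu t))).not_ge (cos_le_one _)
  · have himage : {z | c ≤ u z} ∩ range γ = γ '' Icc (τ - arccos c) (τ + arccos c) := by
      refine subset_antisymm ?_ ?_
      · rintro z ⟨hz, hzγ⟩
        obtain ⟨t, ht, rfl⟩ := (hγ.range_eq_image_Icc (τ - π)).subset hzγ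
        exact ⟨t, (le_cos_sub_iff hc ⟨ht.1, by linarith [ht.2]⟩).1 (hz.trans_eq (hu t)), rfl⟩
      · rintro _ ⟨t, ht, rfl⟩
        refine ⟨((le_cos_sub_iff hc ⟨?_, ?_⟩).2 ht).trans_eq (hu t).symm, mem_range_self t⟩
        · linarith [ht.1, arccos_le_pi c]
        · linarith [ht.2, arccos_le_pi c]
    rw [himage]
    exact isPreconnected_Icc.image _ hγ.continuous.continuousOn

theorem isPreconnected_superlevel_of_eq_cos (hD : IsOpen D) (hb : Bornology.IsBounded D)
    {γ : ℝ → ℂ} (hγ : IsSimpleLoop γ) (hfr : frontier D = range γ) (hu : HarmonicOnNhd u D)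
    (huc : ContinuousOn u (closure D)) {τ : ℝ} (hbd : ∀ t, u (γ t) = cos (t - τ)) :
    IsPreconnected {z ∈ closure D | c ≤ u z} := by
  refine (SubharmonicOn.of_harmonicOnNhd hD hu).isPreconnected_superlevel hD hb huc ?_
  convert hγ.isPreconnected_setOf_le_inter_range hbd (c := c) using 1
  rw [hfr]
  exact Set.ext fun z => ⟨fun hz => ⟨hz.1.2, hz.2⟩,
    fun hz => ⟨⟨frontier_subset_closure (hfr ▸ hz.2), hz.1⟩, hz.2⟩⟩

end LevelSets

section Crossing

/-- For `z` on the vertical line through `p`, the quotient is negative exactly between `p` and its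
conjugate. -/
lemma div_sub_conj_mem_slitPlane {p z : ℂ} (hp : p.im ≠ 0) (hz : z ≠ starRingEnd ℂ p)
    (h : z.re = p.re → ‖p‖ < ‖z‖) : (z - p) / (z - starRingEnd ℂ p) ∈ Complex.slitPlane := by
  have hpos : 0 < Complex.normSq (z - starRingEnd ℂ p) := Complex.normSq_pos.2 (sub_ne_zero.2 hz)
  rw [Complex.mem_slitPlane_iff, Complex.div_re, Complex.div_im, ← add_div, ← sub_div]
  rcases eq_or_ne z.re p.re with hre | hre
  · left
    have hsq := (sq_lt_sq₀ (norm_nonneg _) (norm_nonneg _)).2 (h hre)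
    rw [Complex.sq_norm, Complex.sq_norm, Complex.normSq_apply, Complex.normSq_apply, hre] at hsq
    refine div_pos ?_ hpos
    simp only [Complex.sub_re, Complex.sub_im, Complex.conj_re, Complex.conj_im, hre]
    nlinarith
  · right
    refine div_ne_zero ?_ hpos.ne'
    simp only [Complex.sub_re, Complex.sub_im, Complex.conj_re, Complex.conj_im]
    have hne := mul_ne_zero (mul_ne_zero two_ne_zero hp) (sub_ne_zero.2 hre)
    contrapose! hne
    linear_combination -hne

lemma im_div_ofReal_sub_conj (p : ℂ) (r : ℝ) :
    ((r - p) / (r - starRingEnd ℂ p)).im =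
      2 * p.im * (p.re - r) / Complex.normSq (r - starRingEnd ℂ p) := by
  rw [Complex.div_im, ← sub_div]
  simp only [Complex.sub_re, Complex.sub_im, Complex.conj_re, Complex.conj_im, Complex.ofReal_re,
    Complex.ofReal_im]
  ring

lemma tendsto_div_ofReal_sub_conj {p : ℂ} (hp : p.im ≠ 0) :
    Tendsto (fun r : ℝ => (r - p) / (r - starRingEnd ℂ p)) (𝓝 p.re) (𝓝 (-1)) := by
  have hne (r : ℝ) : (r : ℂ) - starRingEnd ℂ p ≠ 0 := fun h => hp (by
    simpa using congrArg Complex.im h)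
  have hval : ((p.re : ℂ) - p) / (p.re - starRingEnd ℂ p) = -1 := by
    rw [div_eq_iff (hne _)]
    apply Complex.ext <;> simp
  rw [← hval]
  exact (Continuous.div (by fun_prop) (by fun_prop) hne).tendsto p.re

lemma tendsto_log_div_ofReal_sub_conj_nhdsGT {p : ℂ} (hp : 0 < p.im) :
    Tendsto (fun r : ℝ => Complex.log ((r - p) / (r - starRingEnd ℂ p))) (𝓝[>] p.re)
      (𝓝 (-(π * Complex.I))) := by
  have hlog := Complex.tendsto_log_nhdsWithin_im_neg_of_re_neg_of_im_zero (z := -1)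
    (by simp) (by simp)
  simp only [norm_neg, norm_one, log_one, Complex.ofReal_zero, zero_sub] at hlog
  refine hlog.comp (tendsto_nhdsWithin_iff.2
    ⟨(tendsto_div_ofReal_sub_conj hp.ne').mono_left nhdsWithin_le_nhds, ?_⟩)
  filter_upwards [self_mem_nhdsWithin] with r hr
  rw [im_div_ofReal_sub_conj]
  refine div_neg_of_neg_of_pos (mul_neg_of_pos_of_neg (by positivity) (sub_neg.2 hr)) ?_
  exact Complex.normSq_pos.2 fun h => hp.ne' (by simpa using congrArg Complex.im h)

lemma tendsto_log_div_ofReal_sub_conj_nhdsLT {p : ℂ} (hp : 0 < p.im) :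
    Tendsto (fun r : ℝ => Complex.log ((r - p) / (r - starRingEnd ℂ p))) (𝓝[<] p.re)
      (𝓝 (π * Complex.I)) := by
  have hlog := Complex.tendsto_log_nhdsWithin_im_nonneg_of_re_neg_of_im_zero (z := -1)
    (by simp) (by simp)
  simp only [norm_neg, norm_one, log_one, Complex.ofReal_zero, zero_add] at hlog
  refine hlog.comp (tendsto_nhdsWithin_iff.2
    ⟨(tendsto_div_ofReal_sub_conj hp.ne').mono_left nhdsWithin_le_nhds, ?_⟩)
  filter_upwards [self_mem_nhdsWithin] with r hr
  rw [im_div_ofReal_sub_conj]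
  exact div_nonneg (mul_nonneg (by positivity) (sub_nonneg.2 (mem_Iio.1 hr).le))
    (Complex.normSq_nonneg _)

/-- The principal logarithm of the quotient jumps by `2 * π * I` where the real axis crosses the
segment from `p` to its conjugate, and `X` does not meet that segment anywhere else. -/
lemma not_hasContinuousLog_div_sub_conj {X : Set ℂ} {p : ℂ} (hp : 0 < p.im)
    (hX : IsPreconnected (X \ {(p.re : ℂ)})) (hpX : starRingEnd ℂ p ∉ X)
    (hnorm : ∀ z ∈ X \ {(p.re : ℂ)}, z.re = p.re → ‖p‖ < ‖z‖)
    (hreal : ∀ᶠ r : ℝ in 𝓝 p.re, (r : ℂ) ∈ X) :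
    ¬ HasContinuousLog (fun z => (z - p) / (z - starRingEnd ℂ p)) X := by
  rintro ⟨L, hL, hexp⟩
  have hne {z : ℂ} (hz : z ∈ X) : z ≠ starRingEnd ℂ p := fun h => hpX (h ▸ hz)
  have hslit {z : ℂ} (hz : z ∈ X \ {(p.re : ℂ)}) :
      (z - p) / (z - starRingEnd ℂ p) ∈ Complex.slitPlane :=
    div_sub_conj_mem_slitPlane hp.ne' (hne hz.1) (hnorm z hz)
  obtain ⟨n, hn⟩ := exists_int_log_eq_add hX (hL.mono sdiff_subset)
    (L₂ := fun z => Complex.log ((z - p) / (z - starRingEnd ℂ p)))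
    (ContinuousOn.clog (.div (by fun_prop) (by fun_prop) fun z hz => sub_ne_zero.2 (hne hz.1))
      fun z hz => hslit hz)
    fun z hz => by rw [hexp z hz.1, Complex.exp_log (Complex.slitPlane_ne_zero (hslit hz))]
  have hlim : Tendsto (fun r : ℝ => L r - n * (2 * π * Complex.I)) (𝓝[≠] p.re)
      (𝓝 (L p.re - n * (2 * π * Complex.I))) := by
    have hLp := (hL _ hreal.self_of_nhds).tendsto.comp (tendsto_nhdsWithin_iff.2
      ⟨Complex.continuous_ofReal.tendsto p.re, hreal⟩)
    exact (hLp.mono_left nhdsWithin_le_nhds).sub_const _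
  have hlog : (fun r : ℝ => L r - n * (2 * π * Complex.I)) =ᶠ[𝓝[≠] p.re]
      fun r => Complex.log ((r - p) / (r - starRingEnd ℂ p)) := by
    filter_upwards [nhdsWithin_le_nhds hreal, self_mem_nhdsWithin] with r hrX hr
    rw [hn r ⟨hrX, fun h => hr (Complex.ofReal_injective h)⟩, add_sub_cancel_right]
  have hjump := hlim.congr' hlog
  have hgt := tendsto_nhds_unique (hjump.mono_left (nhdsGT_le_nhdsNE _))
    (tendsto_log_div_ofReal_sub_conj_nhdsGT hp)
  have hlt := tendsto_nhds_unique (hjump.mono_left (nhdsLT_le_nhdsNE _))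
    (tendsto_log_div_ofReal_sub_conj_nhdsLT hp)
  have hπ := congrArg Complex.im (hgt.symm.trans hlt)
  simp only [Complex.neg_im, Complex.mul_im, Complex.ofReal_re, Complex.ofReal_im, Complex.I_re,
    Complex.I_im, mul_one, mul_zero, add_zero] at hπ
  linarith [pi_pos]

/-- The part of the ray from the origin with angle `α` whose radii lie in `I`. -/
def rayOn (α : ℝ) (I : Set ℝ) : Set ℂ := (circleMap 0 · α) '' I

lemma continuous_circleMap_radius (c : ℂ) (α : ℝ) : Continuous (circleMap c · α) := by
  unfold circleMap
  fun_prop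

lemma isPreconnected_rayOn (α : ℝ) {I : Set ℝ} (hI : I.OrdConnected) :
    IsPreconnected (rayOn α I) :=
  hI.isPreconnected.image _ (continuous_circleMap_radius 0 α).continuousOn

lemma isCompact_rayOn (α : ℝ) {I : Set ℝ} (hI : IsCompact I) : IsCompact (rayOn α I) :=
  hI.image (continuous_circleMap_radius 0 α)

lemma circleMap_mem_rayOn {α r : ℝ} {I : Set ℝ} (hr : r ∈ I) : circleMap 0 r α ∈ rayOn α I :=
  mem_image_of_mem _ hr

lemma ofReal_mem_rayOn_zero {r : ℝ} {I : Set ℝ} : (r : ℂ) ∈ rayOn 0 I ↔ r ∈ I := by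
  simp [rayOn, circleMap]

lemma disjoint_rayOn {α β : ℝ} (hαβ : α ≠ β) (hlt : |α - β| < 2 * π) {I J : Set ℝ}
    (hI : I ⊆ Ioi 0) (hJ : J ⊆ Ici 0) : Disjoint (rayOn α I) (rayOn β J) := by
  rw [Set.disjoint_left]
  rintro _ ⟨r, hr, rfl⟩ ⟨s, hs, h⟩
  obtain rfl : s = r := by
    simpa only [norm_circleMap_zero, abs_of_pos (mem_Ioi.1 (hI hr)),
      abs_of_nonneg (mem_Ici.1 (hJ hs))] using congrArg norm h
  exact hαβ (eq_of_circleMap_eq (mem_Ioi.1 (hI hr)).ne' hlt h.symm)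

lemma isPreconnected_union_rayOn_sdiff {K : Set ℂ} (hK : IsPreconnected K) {β x : ℝ}
    (hK₀ : circleMap 0 1 0 ∈ K) (hKβ : circleMap 0 1 β ∈ K) (hx : x ∈ Ioo (0 : ℝ) 1)
    (hxK : (x : ℂ) ∉ K) (hxβ : (x : ℂ) ∉ rayOn β (Icc 0 1)) :
    IsPreconnected ((K ∪ (rayOn 0 (Icc 0 1) ∪ rayOn β (Icc 0 1))) \ {(x : ℂ)}) := by
  have hsplit : (K ∪ (rayOn 0 (Icc 0 1) ∪ rayOn β (Icc 0 1))) \ {(x : ℂ)} =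
      (rayOn 0 (Ioc x 1) ∪ K) ∪ (rayOn β (Icc 0 1) ∪ rayOn 0 (Ico 0 x)) := by
    have hray : rayOn 0 (Icc 0 1) \ {(x : ℂ)} = rayOn 0 (Ico 0 x) ∪ rayOn 0 (Ioc x 1) := by
      have hinj : Function.Injective (circleMap 0 · 0) := fun r r' h => by
        simpa [circleMap] using h
      rw [show ({(x : ℂ)} : Set ℂ) = (circleMap 0 · 0) '' {x} by simp [circleMap], rayOn,
        ← image_sdiff hinj, rayOn, rayOn, ← image_union]
      congr 1
      ext r
      simp only [Set.mem_sdiff, mem_Icc, mem_singleton_iff, mem_union, mem_Ico, mem_Ioc]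
      grind
    rw [union_sdiff_distrib, union_sdiff_distrib, hray, sdiff_singleton_eq_self hxK,
      sdiff_singleton_eq_self hxβ]
    ac_rfl
  rw [hsplit]
  have hzero {α : ℝ} {I : Set ℝ} (h : 0 ∈ I) : (0 : ℂ) ∈ rayOn α I := ⟨0, h, by simp⟩
  refine IsPreconnected.union (circleMap 0 1 β) (.inr hKβ)
    (.inl (circleMap_mem_rayOn ⟨zero_le_one, le_rfl⟩)) ?_ ?_
  · exact (isPreconnected_rayOn 0 ordConnected_Ioc).union _
      (circleMap_mem_rayOn ⟨hx.2, le_rfl⟩) hK₀ hK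
  · exact (isPreconnected_rayOn β ordConnected_Icc).union 0 (hzero ⟨le_rfl, zero_le_one⟩)
      (hzero ⟨le_rfl, hx.1⟩) (isPreconnected_rayOn 0 ordConnected_Ico)

lemma lt_of_mul_cos_three_mul_eq {r s θ : ℝ} (hr : 0 ≤ r) (hs : 0 < s) (hθ : 0 < θ)
    (hθ' : θ ≤ π / 3) (h : r * cos (3 * θ) = s * cos θ) : s < r := by
  have hcos : 0 < cos θ := cos_pos_of_mem_Ioo ⟨by linarith [pi_pos], by linarith [pi_pos]⟩
  have hcos₃ : cos (3 * θ) < cos θ :=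
    cos_lt_cos_of_nonneg_of_le_pi hθ.le (by linarith) (by linarith)
  obtain rfl | hr := hr.eq_or_lt
  · exact absurd (h.symm.trans (zero_mul _)) (mul_pos hs hcos).ne'
  · exact lt_of_mul_lt_mul_right (h ▸ mul_lt_mul_of_pos_left hcos₃ hr) hcos.le

lemma not_hasContinuousLog_union_rayOn {K : Set ℂ} {θ s : ℝ} (hθ : 0 < θ) (hθ' : θ ≤ π / 3)
    (hs : s ∈ Ioo (0 : ℝ) 1) (hK : IsPreconnected K) (hK₀ : circleMap 0 1 0 ∈ K)
    (hK₃ : circleMap 0 1 (3 * θ) ∈ K) (hsK : ∀ z ∈ K, s < ‖z‖) :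
    ¬ HasContinuousLog (fun z => (z - circleMap 0 s θ) / (z - circleMap 0 s (-θ)))
      (K ∪ (rayOn 0 (Icc 0 1) ∪ rayOn (3 * θ) (Icc 0 1))) := by
  obtain ⟨hs₀, hs₁⟩ := hs
  have := pi_pos
  have hcos₀ : 0 < cos θ := cos_pos_of_mem_Ioo ⟨by linarith, by linarith⟩
  have hcos₁ : cos θ < 1 := by
    simpa using cos_lt_cos_of_nonneg_of_le_pi le_rfl (by linarith) hθ
  have hre : (circleMap 0 s θ).re = s * cos θ := circleMap_zero_re s θ
  have hnorm (α : ℝ) : ‖circleMap 0 s α‖ = s := by rw [norm_circleMap_zero, abs_of_pos hs₀]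
  have hx : s * cos θ ∈ Ioo (0 : ℝ) 1 := ⟨by positivity, by nlinarith⟩
  have hI : Ioc (0 : ℝ) 1 ⊆ Ioi 0 := Ioc_subset_Ioi_self
  have hJ : Icc (0 : ℝ) 1 ⊆ Ici 0 := Icc_subset_Ici_self
  rw [← conj_circleMap_zero]
  refine not_hasContinuousLog_div_sub_conj ?_ ?_ ?_ ?_ ?_
  · rw [circleMap_zero_im]
    exact mul_pos hs₀ (sin_pos_of_pos_of_lt_pi hθ (by linarith))
  · rw [hre]
    refine isPreconnected_union_rayOn_sdiff hK hK₀ hK₃ hx (fun h => ?_) fun h => ?_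
    · have := hsK _ h
      rw [Complex.norm_of_nonneg hx.1.le] at this
      nlinarith
    · exact Set.disjoint_left.1 (disjoint_rayOn (by linarith) (abs_lt.2 ⟨by linarith, by linarith⟩)
        hI hJ) (ofReal_mem_rayOn_zero.2 ⟨hx.1, hx.2.le⟩) h
  · have hdisj {β : ℝ} (hne : -θ ≠ β) (hlt : |-θ - β| < 2 * π) :
        circleMap 0 s (-θ) ∉ rayOn β (Icc 0 1) :=
      Set.disjoint_left.1 (disjoint_rayOn hne hlt hI hJ) (circleMap_mem_rayOn ⟨hs₀, hs₁.le⟩)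
    rw [conj_circleMap_zero]
    rintro (h | h | h)
    · exact (hsK _ h).ne' (hnorm _)
    · exact hdisj (by linarith) (abs_lt.2 ⟨by linarith, by linarith⟩) h
    · exact hdisj (by linarith) (abs_lt.2 ⟨by linarith, by linarith⟩) h
  · rw [hnorm, hre]
    rintro z ⟨h | ⟨r, -, rfl⟩ | ⟨r, hr, rfl⟩, hz⟩ hzre
    · exact hsK z h
    · exact absurd (Complex.ext hzre (by simp [circleMap_zero_im])) hz
    · rw [norm_circleMap_zero, abs_of_nonneg hr.1]
      exact lt_of_mul_cos_three_mul_eq hr.1 hs₀ hθ hθ'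
        (by simpa only [circleMap_zero_re] using hzre)
  · rw [hre]
    filter_upwards [Icc_mem_nhds hx.1 hx.2] with r hr
    exact .inr (.inl (ofReal_mem_rayOn_zero.2 hr))

theorem not_disjoint_of_interlaced_rays {K L : Set ℂ} {θ : ℝ} (hθ : 0 < θ) (hθ' : θ ≤ π / 3)
    (hK : IsClosed K) (hKc : IsPreconnected K) (hLc : IsPreconnected L)
    (hK₀ : circleMap 0 1 0 ∈ K) (hK₃ : circleMap 0 1 (3 * θ) ∈ K)
    (hL₁ : circleMap 0 1 θ ∈ L) (hL₂ : circleMap 0 1 (-θ) ∈ L)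
    (hK₁ : Disjoint (rayOn θ (Icc 0 1)) K) (hK₂ : Disjoint (rayOn (-θ) (Icc 0 1)) K)
    (hL₀ : Disjoint L (rayOn 0 (Icc 0 1))) (hL₃ : Disjoint L (rayOn (3 * θ) (Icc 0 1))) :
    ¬ Disjoint L K := by
  intro hLK
  have h0K : (0 : ℂ) ∈ Kᶜ := Set.disjoint_left.1 hK₁ ⟨0, ⟨le_rfl, zero_le_one⟩, by simp⟩
  obtain ⟨ρ, hρ, hball⟩ := Metric.isOpen_iff.1 hK.isOpen_compl 0 h0K
  obtain ⟨s, hs₀, hs⟩ := exists_between (lt_min hρ one_pos)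
  obtain ⟨hsρ, hs₁⟩ := lt_min_iff.1 hs
  have hsK : ∀ z ∈ K, s < ‖z‖ := fun z hz => lt_of_not_ge fun h =>
    hball (mem_ball_zero_iff.2 (h.trans_lt hsρ)) hz
  refine not_hasContinuousLog_union_rayOn hθ hθ' ⟨hs₀, hs₁⟩ hKc hK₀ hK₃ hsK ?_
  have hI : Icc s 1 ⊆ Icc 0 1 := Icc_subset_Icc_left hs₀.le
  have hrays {α β : ℝ} (hne : α ≠ β) (hlt : |α - β| < 2 * π) :
      Disjoint (rayOn α (Icc s 1)) (rayOn β (Icc 0 1)) :=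
    disjoint_rayOn hne hlt (fun r hr => hs₀.trans_le hr.1) Icc_subset_Ici_self
  have hrayK {α : ℝ} (h : Disjoint (rayOn α (Icc 0 1)) K) : Disjoint (rayOn α (Icc s 1)) K :=
    h.mono_left (image_mono hI)
  have hleft (α : ℝ) : circleMap 0 s α ∈ rayOn α (Icc s 1) := circleMap_mem_rayOn ⟨le_rfl, hs₁.le⟩
  have hright (α : ℝ) : circleMap 0 1 α ∈ rayOn α (Icc s 1) := circleMap_mem_rayOn ⟨hs₁.le, le_rfl⟩
  refine hasContinuousLog_div_of_isPreconnected (C := L ∪ rayOn θ (Icc s 1) ∪ rayOn (-θ) (Icc s 1))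
    ?_ ?_ ?_ (.inr (hleft _)) (.inl (.inr (hleft _)))
  · exact hK.union ((isCompact_rayOn _ isCompact_Icc).isClosed.union
      (isCompact_rayOn _ isCompact_Icc).isClosed)
  · exact (hLc.union _ hL₁ (hright θ) (isPreconnected_rayOn _ ordConnected_Icc)).union _
      (.inl hL₂) (hright (-θ)) (isPreconnected_rayOn _ ordConnected_Icc)
  · simp only [disjoint_union_left, disjoint_union_right]
    have := pi_pos
    refine ⟨⟨⟨hLK, hrayK hK₁⟩, hrayK hK₂⟩, ⟨⟨hL₀, hrays ?_ ?_⟩, hrays ?_ ?_⟩,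
      ⟨⟨hL₃, hrays ?_ ?_⟩, hrays ?_ ?_⟩⟩
    all_goals first | linarith | exact abs_lt.2 ⟨by linarith, by linarith⟩

end Crossing

section CriticalPoints

lemma exists_eventually_eq_add_pow_mul {G : ℂ → ℂ} {z₀ : ℂ} (hG : AnalyticAt ℂ G z₀)
    (hnc : ¬ EventuallyConst G (𝓝 z₀)) (hG' : deriv G z₀ = 0) :
    ∃ n : ℕ, 2 ≤ n ∧ ∃ d : ℂ, d ≠ 0 ∧ ∃ h : ℂ → ℂ, ContinuousAt h 0 ∧ h 0 = 1 ∧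
      ∀ᶠ w in 𝓝 0, G (z₀ + d * w) = G z₀ + w ^ n * h w := by
  have han : AnalyticAt ℂ (G · - G z₀) z₀ := hG.sub analyticAt_const
  have htop : analyticOrderAt (G · - G z₀) z₀ ≠ ⊤ :=
    mt eventuallyConst_iff_analyticOrderAt_sub_eq_top.2 hnc
  obtain ⟨n, hn⟩ := ENat.ne_top_iff_exists.1 htop
  obtain ⟨g, hg, hg₀, hGg⟩ := han.analyticOrderAt_eq_natCast.1 hn.symm
  have hn₂ : 2 ≤ n := by
    have hord := hG.analyticOrderAt_deriv_add_one
    have hone := Order.one_le_iff_ne_zero.2 (hG.deriv.analyticOrderAt_ne_zero.2 hG')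
    rw [← hn] at hord
    have : (1 : ℕ∞) + 1 ≤ n := hord ▸ add_le_add_left hone 1
    exact_mod_cast this
  obtain ⟨d, hd⟩ := IsAlgClosed.exists_pow_nat_eq (g z₀)⁻¹ (zero_lt_two.trans_le hn₂)
  have hlin : Tendsto (fun w => z₀ + d * w) (𝓝 0) (𝓝 z₀) := by
    simpa using ((continuous_const_mul d).const_add z₀).tendsto (0 : ℂ)
  refine ⟨n, hn₂, d, ?_, fun w => (g z₀)⁻¹ * g (z₀ + d * w), ?_, ?_, ?_⟩
  · rintro rfl
    rw [zero_pow (by omega)] at hd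
    exact inv_ne_zero hg₀ hd.symm
  · refine continuousAt_const.mul (ContinuousAt.comp (x := (0 : ℂ)) ?_ (by fun_prop))
    simpa using hg.continuousAt
  · simp [hg₀]
  · filter_upwards [hlin.eventually hGg] with w hw
    rw [← hd, eq_add_of_sub_eq' hw, smul_eq_mul]
    ring

lemma eventually_mul_re_circleMap_pow_mul_pos {h : ℂ → ℂ} (hh : ContinuousAt h 0) (h₀ : h 0 = 1)
    {n : ℕ} {σ α : ℝ} (hα : 0 < σ * cos (n * α)) :
    ∀ᶠ r : ℝ in 𝓝[>] 0, 0 < σ * (circleMap 0 r α ^ n * h (circleMap 0 r α)).re := by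
  have hlim : Tendsto (fun w => σ * (circleMap 0 1 (n * α) * h w).re) (𝓝 0)
      (𝓝 (σ * cos (n * α))) := by
    have hre : σ * cos (n * α) = σ * (circleMap 0 1 (n * α) * h 0).re := by
      rw [h₀, mul_one, circleMap_zero_re, one_mul]
    rw [hre]
    exact ((Complex.continuous_re.tendsto _).comp (hh.tendsto.const_mul _)).const_mul σ
  have hray : Tendsto (circleMap 0 · α) (𝓝[>] 0) (𝓝 0) := by
    simpa using ((continuous_circleMap_radius 0 α).tendsto 0).mono_left nhdsWithin_le_nhds
  filter_upwards [hray.eventually (hlim.eventually_const_lt hα), self_mem_nhdsWithin] with r hr hr₀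
  have hpow : circleMap 0 r α ^ n = (r ^ n : ℝ) * circleMap 0 1 (n * α) := by
    simp only [circleMap_zero, mul_pow, ← Complex.exp_nat_mul]
    push_cast
    ring_nf
  rw [hpow, mul_assoc, Complex.re_ofReal_mul, mul_left_comm]
  exact mul_pos (pow_pos hr₀ n) hr

lemma exists_eventually_lt_of_deriv_eq_zero {G : ℂ → ℂ} {z₀ : ℂ} (hG : AnalyticAt ℂ G z₀)
    (hnc : ¬ EventuallyConst G (𝓝 z₀)) (hG' : deriv G z₀ = 0) {u : ℂ → ℝ}
    (hu : ∀ᶠ z in 𝓝 z₀, u z = (G z).re) :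
    ∃ θ, 0 < θ ∧ θ ≤ π / 3 ∧ ∃ d : ℂ, d ≠ 0 ∧
      (∀ α ∈ ({0, 3 * θ} : Set ℝ), ∀ᶠ r : ℝ in 𝓝[>] 0, u z₀ < u (z₀ + d * circleMap 0 r α)) ∧
      ∀ α ∈ ({θ, -θ} : Set ℝ), ∀ᶠ r : ℝ in 𝓝[>] 0, u (z₀ + d * circleMap 0 r α) < u z₀ := by
  obtain ⟨n, hn₂, d, hd, h, hh, h₀, hGd⟩ := exists_eventually_eq_add_pow_mul hG hnc hG'
  have hn : (2 : ℝ) ≤ n := by exact_mod_cast hn₂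
  have hsign {σ α : ℝ} (hα : 0 < σ * cos (n * α)) :
      ∀ᶠ r : ℝ in 𝓝[>] 0, 0 < σ * (u (z₀ + d * circleMap 0 r α) - u z₀) := by
    have hray : Tendsto (circleMap 0 · α) (𝓝[>] 0) (𝓝 0) := by
      simpa using ((continuous_circleMap_radius 0 α).tendsto 0).mono_left nhdsWithin_le_nhds
    have hlin : Tendsto (fun r : ℝ => z₀ + d * circleMap 0 r α) (𝓝[>] 0) (𝓝 z₀) := by
      simpa using (hray.const_mul d).const_add z₀
    filter_upwards [eventually_mul_re_circleMap_pow_mul_pos hh h₀ hα, hray.eventually hGd,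
      hlin.eventually hu] with r hpos hGr hur
    rwa [hur, hu.self_of_nhds, hGr, Complex.add_re, add_sub_cancel_left]
  have hnθ : n * (2 * π / (3 * n)) = π - π / 3 := by
    field_simp
    ring
  refine ⟨2 * π / (3 * n), by positivity, ?_, d, hd, ?_, ?_⟩
  · rw [div_le_div_iff₀ (by positivity) (by positivity)]
    nlinarith [pi_pos]
  · intro α hα
    have hcos : 0 < 1 * cos (n * α) := by
      rcases hα with rfl | rfl
      · simp
      · rw [mul_left_comm, hnθ, show 3 * (π - π / 3) = 2 * π by ring, cos_two_pi]
        norm_num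
    exact (hsign hcos).mono fun r hr => by linarith
  · intro α hα
    have hcos : 0 < -1 * cos (n * α) := by
      rcases hα with rfl | rfl
      · rw [hnθ, cos_pi_sub, cos_pi_div_three]
        norm_num
      · rw [mul_neg, cos_neg, hnθ, cos_pi_sub, cos_pi_div_three]
        norm_num
    exact (hsign hcos).mono fun r hr => by linarith

/-- Within `S`, the function `u` is above its value at `z₀` on two segments issuing from `z₀` and
below it on two others that separate them. The angles are measured from the direction `d`. -/
def HasSaddleAt (u : ℂ → ℝ) (S : Set ℂ) (z₀ : ℂ) : Prop :=
  ∃ θ, 0 < θ ∧ θ ≤ π / 3 ∧ ∃ d : ℂ, d ≠ 0 ∧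
    (∀ α ∈ ({0, 3 * θ} : Set ℝ), ∀ r ∈ Ioc (0 : ℝ) 1,
      z₀ + d * circleMap 0 r α ∈ S ∧ u z₀ < u (z₀ + d * circleMap 0 r α)) ∧
    ∀ α ∈ ({θ, -θ} : Set ℝ), ∀ r ∈ Ioc (0 : ℝ) 1,
      z₀ + d * circleMap 0 r α ∈ S ∧ u (z₀ + d * circleMap 0 r α) < u z₀

lemma hasSaddleAt_of_deriv_eq_zero {G : ℂ → ℂ} {z₀ : ℂ} (hG : AnalyticAt ℂ G z₀)
    (hnc : ¬ EventuallyConst G (𝓝 z₀)) (hG' : deriv G z₀ = 0) {u : ℂ → ℝ}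
    (hu : ∀ᶠ z in 𝓝 z₀, u z = (G z).re) {S : Set ℂ} (hS : S ∈ 𝓝 z₀) :
    HasSaddleAt u S z₀ := by
  obtain ⟨θ, hθ, hθ', d, hd, hup, hdown⟩ := exists_eventually_lt_of_deriv_eq_zero hG hnc hG' hu
  have hmem (α : ℝ) : ∀ᶠ r : ℝ in 𝓝[>] 0, z₀ + d * circleMap 0 r α ∈ S := by
    have hray := (((continuous_circleMap_radius 0 α).const_mul d).const_add z₀).tendsto 0
    simp only [circleMap_zero_radius, Function.const_apply, mul_zero, add_zero] at hray
    exact nhdsWithin_le_nhds (hray.eventually hS)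
  have hev := ((Set.toFinite _).eventually_all.2 fun α hα => (hmem α).and (hup α hα)).and
    ((Set.toFinite _).eventually_all.2 fun α hα => (hmem α).and (hdown α hα))
  obtain ⟨ρ, hρ, hsub⟩ := mem_nhdsGT_iff_exists_Ioc_subset.1 hev
  have hscale (r α : ℝ) : z₀ + d * ρ * circleMap 0 r α = z₀ + d * circleMap 0 (ρ * r) α := by
    simp only [circleMap_zero]
    push_cast
    ring
  have hmul {r : ℝ} (hr : r ∈ Ioc (0 : ℝ) 1) : ρ * r ∈ Ioc 0 ρ :=
    ⟨mul_pos hρ hr.1, mul_le_of_le_one_right (mem_Ioi.1 hρ).le hr.2⟩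
  refine ⟨θ, hθ, hθ', d * ρ, mul_ne_zero hd (by exact_mod_cast (mem_Ioi.1 hρ).ne'), ?_, ?_⟩
  · intro α hα r hr
    rw [hscale]
    exact (hsub (hmul hr)).1 α hα
  · intro α hα r hr
    rw [hscale]
    exact (hsub (hmul hr)).2 α hα

/-- Otherwise the sets where `u` is larger, respectively smaller, than its value at the saddle
would be connected through interlaced sectors. -/
theorem not_hasSaddleAt_of_isPreconnected {u : ℂ → ℝ} {S : Set ℂ} (hS : IsClosed S)
    (huc : ContinuousOn u S) (habove : ∀ c, IsPreconnected {z ∈ S | c ≤ u z})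
    (hbelow : ∀ c, IsPreconnected {z ∈ S | u z ≤ c}) (z₀ : ℂ) : ¬ HasSaddleAt u S z₀ := by
  rintro ⟨θ, hθ, hθ', d, hd, hup, hdown⟩
  set φ : ℂ ≃ₜ ℂ := (Homeomorph.mulLeft₀ d hd).trans (Homeomorph.addLeft z₀)
  have hφ (w : ℂ) : φ w = z₀ + d * w := rfl
  set a := min (u (φ (circleMap 0 1 0))) (u (φ (circleMap 0 1 (3 * θ))))
  set b := max (u (φ (circleMap 0 1 θ))) (u (φ (circleMap 0 1 (-θ))))
  have h₁ : (1 : ℝ) ∈ Ioc 0 1 := ⟨one_pos, le_rfl⟩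
  have ha : u z₀ < a := lt_min (hup _ (.inl rfl) 1 h₁).2 (hup _ (.inr rfl) 1 h₁).2
  have hb : b < u z₀ := max_lt (hdown _ (.inl rfl) 1 h₁).2 (hdown _ (.inr rfl) 1 h₁).2
  have hcase {α r : ℝ} (hr : r ∈ Icc (0 : ℝ) 1) :
      r ∈ Ioc (0 : ℝ) 1 ∨ φ (circleMap 0 r α) = z₀ := by
    rcases hr.1.eq_or_lt with rfl | hr₀
    · exact .inr (by simp [hφ])
    · exact .inl ⟨hr₀, hr.2⟩
  have hrayUp : ∀ α ∈ ({0, 3 * θ} : Set ℝ), ∀ w ∈ rayOn α (Icc 0 1), b < u (φ w) := by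
    rintro α hα _ ⟨r, hr, rfl⟩
    exact hb.trans_le ((hcase hr).elim (fun h => (hup α hα r h).2.le) fun h => by rw [h])
  have hrayDown : ∀ α ∈ ({θ, -θ} : Set ℝ), ∀ w ∈ rayOn α (Icc 0 1), u (φ w) < a := by
    rintro α hα _ ⟨r, hr, rfl⟩
    exact ha.trans_le' ((hcase hr).elim (fun h => (hdown α hα r h).2.le) fun h => by rw [h])
  refine not_disjoint_of_interlaced_rays (K := φ ⁻¹' {z ∈ S | a ≤ u z})
    (L := φ ⁻¹' {z ∈ S | u z ≤ b}) hθ hθ'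
    ((huc.preimage_isClosed_of_isClosed hS isClosed_Ici).preimage φ.continuous)
    (φ.isPreconnected_preimage.2 (habove a)) (φ.isPreconnected_preimage.2 (hbelow b))
    ⟨(hup _ (.inl rfl) 1 h₁).1, min_le_left _ _⟩ ⟨(hup _ (.inr rfl) 1 h₁).1, min_le_right _ _⟩
    ⟨(hdown _ (.inl rfl) 1 h₁).1, le_max_left _ _⟩ ⟨(hdown _ (.inr rfl) 1 h₁).1, le_max_right _ _⟩
    ?_ ?_ ?_ ?_ ?_
  all_goals rw [Set.disjoint_left]
  · exact fun w hw h => h.2.not_gt (hrayDown _ (.inl rfl) w hw)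
  · exact fun w hw h => h.2.not_gt (hrayDown _ (.inr rfl) w hw)
  · exact fun w h hw => h.2.not_gt (hrayUp _ (.inl rfl) w hw)
  · exact fun w h hw => h.2.not_gt (hrayUp _ (.inr rfl) w hw)
  · exact fun w h h' => (hb.trans ha).not_ge (h'.2.trans h.2)

variable {D : Set ℂ} {γ : ℝ → ℂ} {u : ℂ → ℝ} {τ : ℝ}

lemma isPreconnected_sublevel_of_eq_cos (hD : IsOpen D) (hb : Bornology.IsBounded D)
    (hγ : IsSimpleLoop γ) (hfr : frontier D = range γ) (hu : HarmonicOnNhd u D)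
    (huc : ContinuousOn u (closure D)) (hbd : ∀ t, u (γ t) = cos (t - τ)) {c : ℝ} :
    IsPreconnected {z ∈ closure D | u z ≤ c} := by
  have h := isPreconnected_superlevel_of_eq_cos (u := -u) (τ := τ + π) (c := -c) hD hb hγ hfr
    hu.neg huc.neg fun t => by rw [Pi.neg_apply, hbd, ← sub_sub, cos_sub_pi]
  simpa only [Pi.neg_apply, neg_le_neg_iff] using h

lemma not_eventuallyConst_of_eq_cos (hDc : IsPreconnected D)
    (hfr : frontier D = range γ) (hu : HarmonicOnNhd u D) (huc : ContinuousOn u (closure D))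
    (hbd : ∀ t, u (γ t) = cos (t - τ)) {z₀ : ℂ} (hz₀ : z₀ ∈ D) :
    ¬ EventuallyConst u (𝓝 z₀) := by
  intro hconst
  obtain ⟨c, hc⟩ := eventuallyConst_iff_exists_eventuallyEq.1 hconst
  have hEqD : EqOn u (fun _ => c) D := AnalyticOnNhd.eqOn_of_preconnected_of_eventuallyEq
    (fun z hz => HarmonicAt.analyticAt (hu z hz)) analyticOnNhd_const hDc hz₀ hc
  have hEq : EqOn u (fun _ => c) (closure D) :=
    hEqD.of_subset_closure huc continuousOn_const subset_closure subset_rfl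
  have hmem (t : ℝ) : γ t ∈ closure D := frontier_subset_closure (hfr ▸ mem_range_self t)
  have hone : (1 : ℝ) = c := by
    simpa [hbd] using hEq (hmem τ)
  have hneg : (-1 : ℝ) = c := by
    simpa [hbd] using hEq (hmem (τ + π))
  linarith

theorem deriv_ne_zero_of_eq_cos (hD : IsOpen D) (hDc : IsPreconnected D)
    (hb : Bornology.IsBounded D) (hγ : IsSimpleLoop γ) (hfr : frontier D = range γ)
    (hu : HarmonicOnNhd u D) (huc : ContinuousOn u (closure D))
    (hbd : ∀ t, u (γ t) = cos (t - τ)) {z₀ : ℂ} (hz₀ : z₀ ∈ D) {G : ℂ → ℂ}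
    (hG : AnalyticAt ℂ G z₀) (hGu : ∀ᶠ z in 𝓝 z₀, u z = (G z).re) : deriv G z₀ ≠ 0 := by
  intro hG'
  have hnc : ¬ EventuallyConst G (𝓝 z₀) := fun h =>
    not_eventuallyConst_of_eq_cos hDc hfr hu huc hbd hz₀
      (h.comp Complex.re |>.congr (hGu.mono fun _ hz => hz.symm))
  exact not_hasSaddleAt_of_isPreconnected isClosed_closure huc
    (fun _ => isPreconnected_superlevel_of_eq_cos hD hb hγ hfr hu huc hbd)
    (fun _ => isPreconnected_sublevel_of_eq_cos hD hb hγ hfr hu huc hbd) z₀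
    (hasSaddleAt_of_deriv_eq_zero hG hnc hG' hGu
      (mem_of_superset (hD.mem_nhds hz₀) subset_closure))

end CriticalPoints

/-! ### The Radó–Kneser–Choquet theorem -/

section RadoKneserChoquet

variable {D : Set ℂ} {γ : ℝ → ℂ}

lemma IsSimpleLoop.hasBarrier (hγ : IsSimpleLoop γ) (hD : IsOpen D) (hγD : ∀ t, γ t ∉ D) (t : ℝ) :
    HasBarrier D (γ t) := by
  have hne : γ (t + π) ≠ γ (t + 0) := fun heq => by
    have := hγ.injOn_Icc (a := t) (b := t + π) (by linarith [pi_pos])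
      ⟨by linarith [pi_pos], le_rfl⟩ ⟨by linarith, by linarith [pi_pos]⟩ heq
    linarith [pi_pos]
  simpa using hasBarrier_of_curve (γ := fun θ => γ (t + θ)) hD
    (hγ.continuous.comp (continuous_const_add t)) (fun _ => hγD _) pi_pos.le hne

lemma exists_harmonicOnNhd_eq_of_periodic (hD : IsOpen D) (hb : Bornology.IsBounded D)
    (hγ : IsSimpleLoop γ) (hfr : frontier D = range γ) {M : ℝ → ℝ} (hM : Continuous M)
    (hper : Function.Periodic M (2 * π)) :
    ∃ u : ℂ → ℝ, HarmonicOnNhd u D ∧ ContinuousOn u (closure D) ∧ ∀ t, u (γ t) = M t := by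
  have hmem (t : ℝ) : γ t ∈ frontier D := hfr ▸ mem_range_self t
  have hγD (t : ℝ) : γ t ∉ D := fun ht =>
    disjoint_left.1 (disjoint_frontier_iff_isOpen.2 hD).symm ht (hmem t)
  obtain ⟨M', hM', hMM⟩ := hγ.exists_continuousOn_range_eq hM hper
  obtain ⟨u, hu, huc, hue⟩ := exists_harmonicOnNhd_eqOn_frontier (φ := M') hD hb
    (fun x hx => by
      obtain ⟨t, rfl⟩ := hfr.subset hx
      exact hγ.hasBarrier hD hγD t)
    (hfr ▸ hM')
  exact ⟨u, hu, huc, fun t => (hue (hmem t)).trans (hMM t)⟩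

lemma exists_harmonicOnNhd_eq_circleMap (hD : IsOpen D) (hb : Bornology.IsBounded D)
    (hγ : IsSimpleLoop γ) (hfr : frontier D = range γ) :
    ∃ k : ℂ → ℂ, HarmonicOnNhd k D ∧ ContinuousOn k (closure D) ∧
      ∀ t, k (γ t) = circleMap 0 1 t := by
  obtain ⟨u, hu, huc, hut⟩ := exists_harmonicOnNhd_eq_of_periodic hD hb hγ hfr continuous_cos
    cos_periodic
  obtain ⟨v, hv, hvc, hvt⟩ := exists_harmonicOnNhd_eq_of_periodic hD hb hγ hfr continuous_sin
    sin_periodic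
  refine ⟨Complex.ofRealCLM ∘ u + Complex.I • Complex.ofRealCLM ∘ v,
    (hu.comp_CLM _).add (hv.comp_CLM (Complex.I • Complex.ofRealCLM)), ?_, fun t => ?_⟩
  · exact (Complex.ofRealCLM.continuous.comp_continuousOn huc).add
      ((Complex.ofRealCLM.continuous.comp_continuousOn hvc).const_smul Complex.I)
  · simp [hut, hvt, circleMap_zero, Complex.exp_mul_I, mul_comm Complex.I]

lemma fderiv_ne_zero_of_eq_cos (hD : IsOpen D) (hDc : IsPreconnected D)
    (hb : Bornology.IsBounded D) (hγ : IsSimpleLoop γ) (hfr : frontier D = range γ) {u : ℂ → ℝ}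
    (hu : HarmonicOnNhd u D) (huc : ContinuousOn u (closure D)) {τ : ℝ}
    (hbd : ∀ t, u (γ t) = cos (t - τ)) {z₀ : ℂ} (hz₀ : z₀ ∈ D) : fderiv ℝ u z₀ ≠ 0 := by
  intro h0
  obtain ⟨r, hr, hrD⟩ := isOpen_iff.1 hD z₀ hz₀
  obtain ⟨G, hG, hGu⟩ := (hu.mono hrD).exists_analyticOnNhd_ball_re_eq
  have hGz := hG z₀ (mem_ball_self hr)
  have hGu' : u =ᶠ[𝓝 z₀] fun z => (G z).re :=
    (hGu.eventuallyEq_of_mem (ball_mem_nhds z₀ hr)).symm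
  have hder := Complex.reCLM.hasFDerivAt.comp z₀
    (hGz.differentiableAt.hasDerivAt.hasFDerivAt.restrictScalars ℝ)
  have hre (v : ℂ) : (v * deriv G z₀).re = 0 := by
    have := DFunLike.congr_fun ((hder.congr_of_eventuallyEq hGu').fderiv.symm.trans h0) v
    simpa using this
  refine deriv_ne_zero_of_eq_cos hD hDc hb hγ hfr hu huc hbd hz₀ hGz hGu' ?_
  have hsq := hre (starRingEnd ℂ (deriv G z₀))
  rwa [← Complex.normSq_eq_conj_mul_self, Complex.ofReal_re, Complex.normSq_eq_zero] at hsq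

lemma inner_circleMap_zero_one (s t : ℝ) :
    inner ℝ (circleMap 0 1 s) (circleMap 0 1 t) = cos (t - s) := by
  rw [Complex.inner, conj_circleMap_zero, circleMap_zero_mul, circleMap_zero_re, one_mul, one_mul,
    sub_eq_add_neg, add_comm]

lemma fderiv_surjective_of_eq_circleMap (hD : IsOpen D) (hDc : IsPreconnected D)
    (hb : Bornology.IsBounded D) (hγ : IsSimpleLoop γ) (hfr : frontier D = range γ) {k : ℂ → ℂ}
    (hk : HarmonicOnNhd k D) (hkc : ContinuousOn k (closure D))
    (hkt : ∀ t, k (γ t) = circleMap 0 1 t) {z : ℂ} (hz : z ∈ D) :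
    Function.Surjective (fderiv ℝ k z) := by
  rw [← ContinuousLinearMap.coe_coe, ← LinearMap.range_eq_top, ← Submodule.orthogonal_eq_bot_iff]
  by_contra hne
  obtain ⟨w, hw, hw₀⟩ := Submodule.ne_bot_iff _ |>.1 hne
  have hwarg : w = ‖w‖ • circleMap 0 1 w.arg := by
    simp [circleMap_zero, Complex.norm_mul_exp_arg_mul_I]
  refine fderiv_ne_zero_of_eq_cos hD hDc hb hγ hfr (τ := w.arg)
    (hk.comp_CLM (innerSL ℝ (circleMap 0 1 w.arg)))
    ((innerSL ℝ _).continuous.comp_continuousOn hkc)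
    (fun t => by rw [Function.comp_apply, hkt, innerSL_apply_apply, inner_circleMap_zero_one]) hz ?_
  rw [fderiv_comp z (innerSL ℝ _).differentiableAt ((hk z hz).1.differentiableAt two_ne_zero),
    ContinuousLinearMap.fderiv]
  ext v
  have hv : inner ℝ w (fderiv ℝ k z v) = 0 :=
    (Submodule.mem_orthogonal' _ _).1 hw _ ⟨v, rfl⟩
  rw [hwarg, real_inner_smul_left, mul_eq_zero] at hv
  simpa using hv.resolve_left (norm_ne_zero_iff.2 hw₀)

lemma isLocalHomeomorphOn_of_eq_circleMap (hD : IsOpen D) (hDc : IsPreconnected D)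
    (hb : Bornology.IsBounded D) (hγ : IsSimpleLoop γ) (hfr : frontier D = range γ) {k : ℂ → ℂ}
    (hk : HarmonicOnNhd k D) (hkc : ContinuousOn k (closure D))
    (hkt : ∀ t, k (γ t) = circleMap 0 1 t) : IsLocalHomeomorphOn k D := by
  intro z hz
  have hsurj := fderiv_surjective_of_eq_circleMap hD hDc hb hγ hfr hk hkc hkt hz
  let T : ℂ ≃L[ℝ] ℂ := (LinearEquiv.ofBijective (fderiv ℝ k z : ℂ →ₗ[ℝ] ℂ)
    ⟨LinearMap.injective_iff_surjective.2 hsurj, hsurj⟩).toContinuousLinearEquiv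
  have hT : HasStrictFDerivAt k (T : ℂ →L[ℝ] ℂ) z := (hk z hz).1.hasStrictFDerivAt two_ne_zero
  exact ⟨hT.toOpenPartialHomeomorph, hT.mem_toOpenPartialHomeomorph_source, rfl⟩

lemma norm_le_one_of_eq_circleMap (hD : IsOpen D) (hb : Bornology.IsBounded D)
    (hfr : frontier D = range γ) {k : ℂ → ℂ} (hk : HarmonicOnNhd k D)
    (hkc : ContinuousOn k (closure D)) (hkt : ∀ t, k (γ t) = circleMap 0 1 t) {z : ℂ}
    (hz : z ∈ closure D) : ‖k z‖ ≤ 1 := by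
  have hle := (SubharmonicOn.of_harmonicOnNhd hD (hk.comp_CLM (innerSL ℝ (k z)))).le_of_le_frontier
    hD hb ((innerSL ℝ _).continuous.comp_continuousOn hkc) (m := ‖k z‖)
    (fun x hx => by
      obtain ⟨t, rfl⟩ := hfr.subset hx
      simpa [hkt] using real_inner_le_norm (k z) (circleMap 0 1 t)) z hz
  have hsq : ‖k z‖ * ‖k z‖ ≤ ‖k z‖ := (real_inner_self_eq_norm_mul_norm (k z)).symm.trans_le hle
  nlinarith [norm_nonneg (k z)]

lemma mapsTo_ball_of_isLocalHomeomorphOn {k : ℂ → ℂ} (hD : IsOpen D)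
    (hk : IsLocalHomeomorphOn k D) (hle : ∀ z ∈ D, ‖k z‖ ≤ 1) : MapsTo k D (ball 0 1) := by
  have hopen : IsOpen (k '' D) := by
    rw [isOpen_iff_mem_nhds]
    rintro _ ⟨z, hz, rfl⟩
    exact hk.map_nhds_eq hz ▸ image_mem_map (hD.mem_nhds hz)
  have hsub : k '' D ⊆ interior (closedBall 0 1) := interior_maximal
    (image_subset_iff.2 fun z hz => mem_closedBall_zero_iff.2 (hle z hz)) hopen
  rw [interior_closedBall _ one_ne_zero] at hsub
  exact mapsTo_iff_image_subset.2 hsub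

lemma isCoveringMap_of_isLocalHomeomorph_of_isProperMap {X Y : Type*} [TopologicalSpace X]
    [TopologicalSpace Y] [T2Space X] [T1Space Y] {p : X → Y} (hp : IsLocalHomeomorph p)
    (hproper : IsProperMap p) : IsCoveringMap p := by
  refine isCoveringMap_iff_isCoveringMapOn_univ.2
    (hproper.isClosedMap.isCoveringMapOn_of_isLocalHomeomorphOn (fun y _ => ?_)
      hp.isLocalHomeomorphOn)
  exact (hproper.isCompact_preimage isCompact_singleton).finite
    ((hp.isLocalHomeomorphOn (s := p ⁻¹' {y})).isDiscrete_of_image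
      (((finite_singleton y).subset (image_preimage_subset _ _)).isDiscrete))

lemma bijective_of_isCoveringMap {X Y : Type*} [TopologicalSpace X] [TopologicalSpace Y]
    [ConnectedSpace X] [SimplyConnectedSpace Y] [LocallyPathConnectedSpace Y] {p : X → Y}
    (hp : IsCoveringMap p) : Function.Bijective p := by
  obtain ⟨x₀⟩ := (inferInstance : Nonempty X)
  obtain ⟨s, ⟨hsx, hps⟩, -⟩ := hp.existsUnique_continuousMap_lifts (ContinuousMap.id Y) (p x₀) x₀
    rfl
  have hsp : s ∘ p = id := hp.eq_of_comp_eq (s.continuous.comp hp.continuous) continuous_id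
    (by rw [← Function.comp_assoc, hps]; rfl) x₀ hsx
  exact ⟨Function.LeftInverse.injective (g := s) (congrFun hsp),
    Function.RightInverse.surjective (g := s) (congrFun hps)⟩

lemma isProperMap_mapsToRestrict {X Y : Type*} [TopologicalSpace X] [TopologicalSpace Y]
    [T2Space Y] {D : Set X} {E : Set Y} [CompactlyCoherentSpace E] {k : X → Y}
    (hD : IsCompact (closure D)) (hk : ContinuousOn k (closure D)) (hkD : MapsTo k D E)
    (hfr : ∀ z ∈ closure D, k z ∈ E → z ∈ D) : IsProperMap (hkD.restrict k D E) := by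
  refine isProperMap_iff_isCompact_preimage.2
    ⟨(hk.mono subset_closure).mapsToRestrict hkD, fun C hC => ?_⟩
  have himage : Subtype.val '' (hkD.restrict k D E ⁻¹' C) =
      closure D ∩ k ⁻¹' (Subtype.val '' C) := by
    ext z
    constructor
    · rintro ⟨x, hx, rfl⟩
      exact ⟨subset_closure x.2, _, hx, rfl⟩
    · rintro ⟨hz, w, hw, hwz⟩
      have hzD : z ∈ D := hfr z hz (hwz ▸ w.2)
      refine ⟨⟨z, hzD⟩, ?_, rfl⟩
      rwa [mem_preimage, ← show w = hkD.restrict k D E ⟨z, hzD⟩ from Subtype.ext hwz]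
  rw [Subtype.isCompact_iff, himage]
  exact hD.of_isClosed_subset (hk.preimage_isClosed_of_isClosed isClosed_closure
    (hC.image continuous_subtype_val).isClosed) inter_subset_left

lemma bijOn_ball_of_isLocalHomeomorphOn {k : ℂ → ℂ} (hD : IsOpen D) (hDc : IsConnected D)
    (hb : Bornology.IsBounded D) (hkc : ContinuousOn k (closure D))
    (hk : IsLocalHomeomorphOn k D) (hkD : MapsTo k D (ball 0 1))
    (hfr : MapsTo k (frontier D) (sphere 0 1)) : BijOn k D (ball 0 1) := by
  have hlocal : IsLocalHomeomorph (hkD.restrict k D (ball 0 1)) := by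
    refine IsLocalHomeomorph.of_comp (g := (Subtype.val : ball (0 : ℂ) 1 → ℂ)) ?_
      isOpen_ball.isOpenEmbedding_subtypeVal.isLocalHomeomorph
      ((hkc.mono subset_closure).mapsToRestrict hkD)
    rw [isLocalHomeomorph_iff_isLocalHomeomorphOn_univ]
    exact hk.comp (hD.isOpenEmbedding_subtypeVal.isLocalHomeomorph.isLocalHomeomorphOn (s := univ))
      fun z _ => z.2
  have hproper : IsProperMap (hkD.restrict k D (ball 0 1)) :=
    isProperMap_mapsToRestrict hb.isCompact_closure hkc hkD fun z hz hkz => by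
      by_contra hzD
      exact (mem_ball.1 hkz).ne (hfr (hD.frontier_eq ▸ ⟨hz, hzD⟩))
  have := contractibleSpace_ball (x := (0 : ℂ)) one_pos
  have := (isOpen_ball (x := (0 : ℂ)) (ε := 1)).locallyPathConnectedSpace
  have := isConnected_iff_connectedSpace.1 hDc
  have hbij := bijective_of_isCoveringMap
    (isCoveringMap_of_isLocalHomeomorph_of_isProperMap hlocal hproper)
  exact ⟨hkD, (hkD.restrict_inj).1 hbij.1, (hkD.restrict_surjective_iff).1 hbij.2⟩

lemma isSimpleLoop_circleMap : IsSimpleLoop (circleMap 0 1) := by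
  refine ⟨continuous_circleMap 0 1, fun s t => ?_⟩
  simp_rw [circleMap_eq_circleMap_iff _ one_ne_zero, ← mul_assoc (_ : ℂ) _ Complex.I, ← add_mul,
    mul_left_inj' Complex.I_ne_zero]
  norm_cast

lemma bijOn_range_of_eq_circleMap (hγ : IsSimpleLoop γ) {k : ℂ → ℂ}
    (hkt : ∀ t, k (γ t) = circleMap 0 1 t) : BijOn k (range γ) (sphere 0 1) := by
  refine ⟨?_, ?_, fun w hw => ?_⟩
  · rintro _ ⟨t, rfl⟩
    simp [hkt]
  · rintro _ ⟨t, rfl⟩ _ ⟨s, rfl⟩ hts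
    rwa [hkt, hkt, isSimpleLoop_circleMap.eq_iff, ← hγ.eq_iff] at hts
  · rw [← abs_one, ← range_circleMap] at hw
    obtain ⟨t, rfl⟩ := hw
    exact ⟨γ t, mem_range_self t, hkt t⟩

/-- `C` is a closed disc with boundary circle the loop `γ`: some homeomorphism from `C` onto the
closed unit disc takes `γ t` to `exp (t * I)`. Since `C` is compact, a continuous bijection is
enough. -/
structure IsDiscBoundedBy {X : Type*} [TopologicalSpace X] (C : Set X) (γ : ℝ → X) : Prop where
  isCompact : IsCompact C
  range_subset : range γ ⊆ C
  exists_bijOn : ∃ k : X → ℂ, ContinuousOn k C ∧ BijOn k C (closedBall 0 1) ∧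
    ∀ t, k (γ t) = circleMap 0 1 t

theorem isDiscBoundedBy_closure (hD : IsOpen D) (hDc : IsConnected D)
    (hb : Bornology.IsBounded D) (hγ : IsSimpleLoop γ) (hfr : frontier D = range γ) :
    IsDiscBoundedBy (closure D) γ := by
  obtain ⟨k, hk, hkc, hkt⟩ := exists_harmonicOnNhd_eq_circleMap hD hb hγ hfr
  have hlocal := isLocalHomeomorphOn_of_eq_circleMap hD hDc.isPreconnected hb hγ hfr hk hkc hkt
  have hkD : MapsTo k D (ball 0 1) := mapsTo_ball_of_isLocalHomeomorphOn hD hlocal fun z hz =>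
    norm_le_one_of_eq_circleMap hD hb hfr hk hkc hkt (subset_closure hz)
  have hfrontier : BijOn k (frontier D) (sphere 0 1) := hfr ▸ bijOn_range_of_eq_circleMap hγ hkt
  have hinterior := bijOn_ball_of_isLocalHomeomorphOn hD hDc hb hkc hlocal hkD hfrontier.mapsTo
  refine ⟨hb.isCompact_closure, hfr ▸ frontier_subset_closure, k, hkc, ?_, hkt⟩
  have hdisj : Disjoint D (frontier D) := (disjoint_frontier_iff_isOpen.2 hD).symm
  rw [closure_eq_self_union_frontier, ← ball_union_sphere]
  refine hinterior.union hfrontier ((injOn_union hdisj).2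
    ⟨hinterior.injOn, hfrontier.injOn, fun x hx y hy hxy => ?_⟩)
  exact disjoint_left.1 sphere_disjoint_ball (hfrontier.mapsTo hy) (hxy ▸ hkD hx)

end RadoKneserChoquet

/-! ### Simple closed curves in the sphere -/

section Discs

namespace IsDiscBoundedBy

variable {X Y : Type*} [TopologicalSpace X] [TopologicalSpace Y] {C : Set X} {γ : ℝ → X}

lemma image [T2Space Y] (h : IsDiscBoundedBy C γ) {q : X → Y} (hq : Continuous q)
    (hqi : Function.Injective q) : IsDiscBoundedBy (q '' C) (q ∘ γ) := by
  obtain ⟨k, hk, hkb, hkt⟩ := h.exists_bijOn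
  have : Nonempty X := ⟨γ 0⟩
  obtain ⟨l, hl, hlk⟩ := exists_continuousOn_image_eq h.isCompact hq.continuousOn hk
    fun s _ t _ hst => congrArg k (hqi hst)
  refine ⟨h.isCompact.image hq, range_comp q γ ▸ image_mono h.range_subset, l, hl, ?_, fun t => ?_⟩
  · have hlb : BijOn (l ∘ q) C (closedBall 0 1) := (EqOn.bijOn_iff hlk).2 hkb
    exact ⟨mapsTo_image_iff.2 hlb.mapsTo, hlb.injOn.image_of_comp,
      hlb.surjOn.of_comp (mapsTo_image q C)⟩
  · rw [Function.comp_apply, hlk _ (h.range_subset (mem_range_self t)), hkt]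

lemma exists_bijOn_disc {C' : Set Y} {γ' : ℝ → Y} (h : IsDiscBoundedBy C γ)
    (h' : IsDiscBoundedBy C' γ') :
    ∃ f : X → Y, ContinuousOn f C ∧ BijOn f C C' ∧ ∀ t, f (γ t) = γ' t := by
  obtain ⟨k, hk, hkb, hkt⟩ := h.exists_bijOn
  obtain ⟨k', hk', hkb', hkt'⟩ := h'.exists_bijOn
  have : Nonempty Y := ⟨γ' 0⟩
  obtain ⟨l, hl, hlk⟩ := exists_continuousOn_image_eq h'.isCompact hk' continuousOn_id
    fun s hs t ht hst => hkb'.injOn hs ht hst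
  rw [hkb'.image_eq] at hl
  have hlb : BijOn l (closedBall 0 1) C' := BijOn.symm ⟨fun w hw => by
    obtain ⟨y, hy, rfl⟩ := hkb'.surjOn hw
    exact congrArg k' (hlk y hy), hlk⟩ hkb'
  refine ⟨l ∘ k, hl.comp hk hkb.mapsTo, hlb.comp hkb, fun t => ?_⟩
  rw [Function.comp_apply, hkt, ← hkt', hlk _ (h'.range_subset (mem_range_self t)), id]

end IsDiscBoundedBy

lemma exists_homeomorph_of_bijOn_union {X Y : Type*} [TopologicalSpace X] [CompactSpace X]
    [TopologicalSpace Y] [T2Space Y] {C₁ C₂ : Set X} {K₁ K₂ : Set Y} {f₁ f₂ : X → Y}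
    (hC₁ : IsClosed C₁) (hC₂ : IsClosed C₂) (hC : C₁ ∪ C₂ = univ) (hK : K₁ ∪ K₂ = univ)
    (hf₁ : ContinuousOn f₁ C₁) (hf₂ : ContinuousOn f₂ C₂) (hb₁ : BijOn f₁ C₁ K₁)
    (hb₂ : BijOn f₂ C₂ K₂) (heq : EqOn f₁ f₂ (C₁ ∩ C₂)) (hsurj : SurjOn f₁ (C₁ ∩ C₂) (K₁ ∩ K₂)) :
    ∃ Φ : X ≃ₜ Y, EqOn Φ f₁ C₁ := by
  classical
  set F : X → Y := C₁.piecewise f₁ f₂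
  have hF₁ : EqOn F f₁ C₁ := piecewise_eqOn _ _ _
  have hF₂ : EqOn F f₂ C₂ := fun x hx => by
    by_cases hx₁ : x ∈ C₁
    · rw [hF₁ hx₁, heq ⟨hx₁, hx⟩]
    · exact piecewise_eq_of_notMem _ _ _ hx₁
  have hF : Continuous F := by
    rw [← continuousOn_univ, ← hC]
    exact (hf₁.congr hF₁).union_of_isClosed (hf₂.congr hF₂) hC₁ hC₂
  have hcross {x y : X} (hx : x ∈ C₁) (hy : y ∈ C₂) (hxy : F x = F y) : x = y := by
    rw [hF₁ hx, hF₂ hy] at hxy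
    obtain ⟨z, ⟨hz₁, hz₂⟩, hz⟩ := hsurj ⟨hb₁.mapsTo hx, hxy ▸ hb₂.mapsTo hy⟩
    rw [← hb₁.injOn hz₁ hx hz]
    exact hb₂.injOn hz₂ hy (by rw [← heq ⟨hz₁, hz₂⟩, hz, hxy])
  have hinj : Function.Injective F := fun x y hxy => by
    rcases hC.superset (mem_univ x) with hx | hx <;> rcases hC.superset (mem_univ y) with hy | hy
    · exact hb₁.injOn hx hy (by rwa [hF₁ hx, hF₁ hy] at hxy)
    · exact hcross hx hy hxy
    · exact (hcross hy hx hxy.symm).symm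
    · exact hb₂.injOn hx hy (by rwa [hF₂ hx, hF₂ hy] at hxy)
  have hrange : Function.Surjective F := by
    rw [← range_eq_univ, ← image_univ, ← hC, image_union, hF₁.image_eq, hF₂.image_eq,
      hb₁.image_eq, hb₂.image_eq, hK]
  exact ⟨Continuous.homeoOfEquivCompactToT2 (f := Equiv.ofBijective F ⟨hinj, hrange⟩) hF, hF₁⟩

end Discs

section Sphere

variable {X : Type*} [TopologicalSpace X] {g : ℝ → X}

lemma frontier_image_eq {Y : Type*} [TopologicalSpace Y] [T2Space Y] {q : X → Y}
    (hq : IsOpenEmbedding q) {S : Set X} (hS : IsCompact (closure S)) :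
    frontier (q '' S) = q '' frontier S := by
  have hint : interior (q '' S) = q '' interior S := by
    refine Subset.antisymm (fun x hx => ?_) (hq.isOpenMap.image_interior_subset S)
    obtain ⟨w, -, rfl⟩ := interior_subset hx
    rw [← mem_preimage, hq.isOpenMap.preimage_interior_eq_interior_preimage hq.continuous,
      preimage_image_eq S hq.injective] at hx
    exact mem_image_of_mem q hx
  rw [frontier, frontier, image_sdiff hq.injective, image_closure_of_isCompact hS
    hq.continuous.continuousOn, hint]

variable {n : X} {q : ℂ → X}

lemma isPreconnected_compl_pair (hq : IsEmbedding q) (hqn : range q = {n}ᶜ) (w : ℂ) :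
    IsPreconnected ({n, q w}ᶜ : Set X) := by
  have himage : q '' {w}ᶜ = {n, q w}ᶜ := by
    rw [compl_eq_univ_sdiff, image_sdiff hq.injective, image_univ, image_singleton, hqn,
      insert_eq, compl_union, sdiff_eq]
  rw [← himage]
  exact (isConnected_compl_singleton_of_one_lt_rank (by
    rw [Complex.rank_real_complex]; exact Cardinal.one_lt_two) w).isPreconnected.image q
    hq.continuous.continuousOn

lemma IsSimpleLoop.range_ne_univ [T2Space X] (hg : IsSimpleLoop g) (hq : IsEmbedding q)
    (hq₀ : range q = {g 0}ᶜ) : range g ≠ univ := by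
  intro huniv
  have hπ := pi_pos
  have hne {s t : ℝ} (hst : s < t) (ht : t < s + 2 * π) : g s ≠ g t := fun h =>
    hst.ne (hg.eq_of_mem_Ico ⟨le_rfl, hst.trans ht⟩ ⟨hst.le, ht⟩ h)
  have hgπ : g π ∈ range q := hq₀ ▸ (hne (s := 0) hπ (by linarith)).symm
  obtain ⟨w, hw⟩ := hgπ
  have hconn : IsPreconnected ({g 0, g π}ᶜ : Set X) := hw ▸ isPreconnected_compl_pair hq hq₀ w
  have hcover : {g 0, g π}ᶜ ⊆ g '' Icc 0 π ∪ g '' Icc π (2 * π) := by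
    rw [← image_union, Icc_union_Icc_eq_Icc hπ.le (by linarith), ← zero_add (2 * π),
      ← hg.range_eq_image_Icc, huniv]
    exact subset_univ _
  have hclosed (a b : ℝ) : IsClosed (g '' Icc a b) :=
    (isCompact_Icc.image hg.continuous).isClosed
  have hmeet {a b t : ℝ} (ht : t ∈ Icc a b) (ht₀ : g t ≠ g 0) (htπ : g t ≠ g π) :
      ({g 0, g π}ᶜ ∩ g '' Icc a b).Nonempty :=
    ⟨g t, by simp [ht₀, htπ], mem_image_of_mem g ht⟩
  obtain ⟨x, hx, hx'⟩ := isPreconnected_closed_iff.1 hconn _ _ (hclosed 0 π)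
    (hclosed π (2 * π)) hcover
    (hmeet (t := π / 2) ⟨by linarith, by linarith⟩ (hne (by linarith) (by linarith)).symm
      (hne (by linarith) (by linarith)))
    (hmeet (t := 3 * π / 2) ⟨by linarith, by linarith⟩ (hne (by linarith) (by linarith)).symm
      (hne (by linarith) (by linarith)).symm)
  exact hx (hg.eq_or_eq_of_mem_image_inter hx')

variable [CompactSpace X]

lemma isBounded_preimage_of_isClosed (hq : IsEmbedding q) {C : Set X} (hC : IsClosed C)
    (hCq : C ⊆ range q) : Bornology.IsBounded (q ⁻¹' C) :=
  ((hq.isInducing.isCompact_preimage_iff hCq).2 hC.isCompact).isBounded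

lemma isConnected_compl_image (hq : IsEmbedding q) (hqn : range q = {n}ᶜ) {K : Set ℂ}
    (hK : IsCompact K) (hKc : IsConnected Kᶜ) : IsConnected (q '' K)ᶜ := by
  have hsub : q '' Kᶜ ⊆ (q '' K)ᶜ := image_compl_subset hq.injective
  refine (hKc.image q hq.continuous.continuousOn).subset_closure hsub fun x hx => ?_
  by_cases hxq : x ∈ range q
  · obtain ⟨w, rfl⟩ := hxq
    exact subset_closure (mem_image_of_mem q fun hw => hx (mem_image_of_mem q hw))
  · by_contra hcl
    have hxn : x = n := by rwa [hqn, mem_compl_iff, not_not] at hxq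
    have hKb : Bornology.IsBounded Kᶜ := (isBounded_preimage_of_isClosed hq isClosed_closure
      (by rwa [hqn, subset_compl_singleton_iff, ← hxn])).subset fun w hw =>
        subset_closure (mem_image_of_mem q hw)
    exact NormedSpace.unbounded_univ ℝ ℂ (union_compl_self K ▸ hK.isBounded.union hKb)

theorem IsSimpleLoop.exists_isConnected_compl_closure [T2Space X] (hg : IsSimpleLoop g)
    (hq : IsOpenEmbedding q) (hqn : range q = {n}ᶜ) (hn : n ∉ range g) :
    ∃ D : Set X, IsOpen D ∧ IsConnected D ∧ IsConnected (closure D)ᶜ ∧ frontier D = range g ∧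
      frontier (closure D)ᶜ = range g := by
  obtain ⟨γ, hγ, rfl⟩ := hg.exists_comp_eq hq.isEmbedding
    (by rwa [hqn, subset_compl_singleton_iff])
  obtain ⟨U, V, hU, -, hUc, hVc, hUV, hcompl, hUb, -, hfU, hfV⟩ := hγ.exists_isConnected_compl
  have hV : V = (closure U)ᶜ := by
    rw [closure_eq_self_union_frontier, hfU, compl_union, ← hcompl]
    ext z
    simp only [mem_inter_iff, mem_compl_iff, mem_union]
    have hz : z ∈ U → z ∉ V := fun h => disjoint_left.1 hUV h
    tauto
  have hcl : closure (q '' U) = q '' closure U :=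
    (image_closure_of_isCompact hUb.isCompact_closure hq.continuous.continuousOn).symm
  refine ⟨q '' U, hq.isOpenMap U hU, hUc.image q hq.continuous.continuousOn, ?_, ?_, ?_⟩
  · rw [hcl]
    exact isConnected_compl_image hq.isEmbedding hqn hUb.isCompact_closure (hV ▸ hVc)
  · rw [frontier_image_eq hq hUb.isCompact_closure, hfU, range_comp]
  · rw [hcl, frontier_compl, frontier_image_eq hq hUb.isCompact_closure.closure,
      ← frontier_compl, ← hV, hfV, range_comp]

lemma isDiscBoundedBy_closure_of_subset_range [T2Space X] (hg : IsSimpleLoop g)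
    (hq : IsOpenEmbedding q) {D : Set X} (hD : IsOpen D) (hDc : IsConnected D)
    (hfr : frontier D = range g) (hDq : closure D ⊆ range q) : IsDiscBoundedBy (closure D) g := by
  obtain ⟨γ, hγ, rfl⟩ := hg.exists_comp_eq hq.isEmbedding
    (hfr ▸ frontier_subset_closure.trans hDq)
  have hdisc : IsDiscBoundedBy (closure (q ⁻¹' D)) γ := by
    refine isDiscBoundedBy_closure (hD.preimage hq.continuous)
      (hDc.preimage_of_isOpenMap hq.injective hq.isOpenMap (subset_closure.trans hDq))
      ((isBounded_preimage_of_isClosed hq.isEmbedding isClosed_closure hDq).subset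
        (preimage_mono subset_closure)) hγ ?_
    rw [← hq.isOpenMap.preimage_frontier_eq_frontier_preimage hq.continuous, hfr, range_comp,
      preimage_image_eq _ hq.injective]
  rw [← image_preimage_eq_of_subset hDq,
    hq.isOpenMap.preimage_closure_eq_closure_preimage hq.continuous]
  exact hdisc.image hq.continuous hq.injective

instance : CompactSpace sphere2 :=
  isCompact_iff_compactSpace.1 (isCompact_sphere 0 1)

lemma exists_isOpenEmbedding_range_eq_compl_singleton (n : sphere2) :
    ∃ q : ℂ → sphere2, IsOpenEmbedding q ∧ range q = {n}ᶜ := by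
  have : Fact (Module.finrank ℝ E3 = 2 + 1) := ⟨by simp⟩
  let e : OpenPartialHomeomorph (sphere (0 : E3) 1) (EuclideanSpace ℝ (Fin 2)) :=
    stereographic' 2 (n : sphere (0 : E3) 1)
  have ht : e.target = univ := stereographic'_target _
  have hs : e.source = ({n}ᶜ : Set sphere2) := stereographic'_source _
  let i : ℂ ≃ₗᵢ[ℝ] EuclideanSpace ℝ (Fin 2) := Complex.orthonormalBasisOneI.repr
  refine ⟨e.symm ∘ i, (e.symm.isOpenEmbedding ht).comp i.toHomeomorph.isOpenEmbedding, ?_⟩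
  have hrange : range e.symm = e.source := by
    rw [← image_univ, ← ht, e.symm_image_target_eq_source]
  exact ((i.surjective.range_comp e.symm).trans hrange).trans hs

theorem IsSimpleLoop.exists_isDiscBoundedBy_union_eq_univ {g : ℝ → sphere2} (hg : IsSimpleLoop g) :
    ∃ C₁ C₂ : Set sphere2, IsDiscBoundedBy C₁ g ∧ IsDiscBoundedBy C₂ g ∧ C₁ ∪ C₂ = univ ∧
      C₁ ∩ C₂ = range g := by
  obtain ⟨q₀, hq₀, hqr₀⟩ := exists_isOpenEmbedding_range_eq_compl_singleton (g 0)
  obtain ⟨n, hn⟩ := (ne_univ_iff_exists_notMem _).1 (hg.range_ne_univ hq₀.isEmbedding hqr₀)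
  obtain ⟨q, hq, hqr⟩ := exists_isOpenEmbedding_range_eq_compl_singleton n
  obtain ⟨D, hD, hDc, hDc', hfr, hfr'⟩ := hg.exists_isConnected_compl_closure hq hqr hn
  have hdisc {E : Set sphere2} (hE : IsOpen E) (hEc : IsConnected E) (hEg : frontier E = range g)
      {p : sphere2} (hp : p ∉ closure E) : IsDiscBoundedBy (closure E) g := by
    obtain ⟨q, hq, hqr⟩ := exists_isOpenEmbedding_range_eq_compl_singleton p
    exact isDiscBoundedBy_closure_of_subset_range hg hq hE hEc hEg
      (hqr ▸ subset_compl_singleton_iff.2 hp)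
  have hdisj : Disjoint D (closure (closure D)ᶜ) :=
    (disjoint_compl_right.mono_left subset_closure).closure_right hD
  obtain ⟨p, hp⟩ := hDc.nonempty
  obtain ⟨p', hp'⟩ := hDc'.nonempty
  refine ⟨closure D, closure (closure D)ᶜ, hdisc hD hDc hfr hp',
    hdisc isClosed_closure.isOpen_compl hDc' hfr' (disjoint_left.1 hdisj hp),
    eq_univ_of_subset (union_subset_union_right _ subset_closure) (union_compl_self _), ?_⟩
  rw [← hfr', isClosed_closure.isOpen_compl.frontier_eq, sdiff_compl, inter_comm]

theorem IsSimpleLoop.exists_homeomorph_eq {g g' : ℝ → sphere2} (hg : IsSimpleLoop g)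
    (hg' : IsSimpleLoop g') : ∃ Φ : sphere2 ≃ₜ sphere2, ∀ t, Φ (g t) = g' t := by
  obtain ⟨C₁, C₂, h₁, h₂, hunion, hinter⟩ := hg.exists_isDiscBoundedBy_union_eq_univ
  obtain ⟨K₁, K₂, h₁', h₂', hunion', hinter'⟩ := hg'.exists_isDiscBoundedBy_union_eq_univ
  obtain ⟨f₁, hf₁, hb₁, hft₁⟩ := h₁.exists_bijOn_disc h₁'
  obtain ⟨f₂, hf₂, hb₂, hft₂⟩ := h₂.exists_bijOn_disc h₂'
  have heq : EqOn f₁ f₂ (C₁ ∩ C₂) := by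
    rw [hinter]
    rintro _ ⟨t, rfl⟩
    rw [hft₁, hft₂]
  have hsurj : SurjOn f₁ (C₁ ∩ C₂) (K₁ ∩ K₂) := by
    rw [hinter, hinter']
    rintro _ ⟨t, rfl⟩
    exact ⟨g t, mem_range_self t, hft₁ t⟩
  obtain ⟨Φ, hΦ⟩ := exists_homeomorph_of_bijOn_union h₁.isCompact.isClosed h₂.isCompact.isClosed
    hunion hunion' hf₁ hf₂ hb₁ hb₂ heq hsurj
  exact ⟨Φ, fun t => (hΦ (h₁.range_subset (mem_range_self t))).trans (hft₁ t)⟩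

lemma exists_isSimpleLoop_sphere1 :
    ∃ c : ℝ → sphere1, IsSimpleLoop c ∧ Function.Surjective c := by
  let i : ℂ ≃ₗᵢ[ℝ] E2 := Complex.orthonormalBasisOneI.repr
  have hi : IsSimpleLoop (i ∘ circleMap 0 1) :=
    isSimpleLoop_circleMap.comp_injective i.continuous i.injective
  have hrange : range (i ∘ circleMap 0 1) = sphere1 := by
    rw [range_comp, range_circleMap, abs_one, i.image_sphere, map_zero, sphere1]
  obtain ⟨c, hc, hci⟩ := hi.exists_comp_eq (IsEmbedding.subtypeVal (p := (· ∈ sphere1)))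
    (by rw [hrange, Subtype.range_coe])
  refine ⟨c, hc, fun z => ?_⟩
  obtain ⟨t, ht⟩ := hrange.superset z.2
  exact ⟨t, Subtype.ext ((congrFun hci t).trans ht)⟩

end Sphere

end Schoenflies

/-- For any two topological embeddings `f, f'` of the unit circle `S¹ ⊆ ℝ²` into the unit
sphere `S² ⊆ ℝ³` (continuous injective maps), there is a homeomorphism `φ` of `S²` with
`φ ∘ f = f'`. -/
theorem stmt0 (f f' : ↥sphere1 → ↥sphere2)
    (hf : Continuous f) (hf' : Continuous f')
    (hfi : Function.Injective f) (hf'i : Function.Injective f') :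
    ∃ φ : ↥sphere2 ≃ₜ ↥sphere2, ∀ z, φ (f z) = f' z := by
  obtain ⟨c, hc, hsurj⟩ := Schoenflies.exists_isSimpleLoop_sphere1
  obtain ⟨φ, hφ⟩ := (hc.comp_injective hf hfi).exists_homeomorph_eq (hc.comp_injective hf' hf'i)
  exact ⟨φ, hsurj.forall.2 hφ⟩
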